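/- arXiv:1204.6434 — 3 statements merged into one kernel-verified Lean document; each statement's English description precedes it below -/
import Mathlib

section
/- Let n ≥ 1, α ∈ (0,1) and T > 0. Let c : [0,T]×ℝⁿ → ℝ be bounded and measurable, and define v(t,x) := ∫₀^t ∫_{ℝⁿ} Γ(t−τ, x−y) c(τ,y) dy dτ. Then there is a constant C depending only on n and α such that for all 0 ≤ t < t′ ≤ T and x ∈ ℝⁿ, |v(t′,x) − v(t,x)| ≤ C · T^{1−α/2} · (t′−t)^{α/2} · sup_{(τ,y)} |c(τ,y)|. -/
/-!
The kernels `Γ(t, ·)` are probability densities, and for `s ≤ t` they satisfy the pointwise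
domination `(s/t)^{n/2} Γ(s, z) ≤ Γ(t, z)`. Two probability densities related in this way differ
in `L¹` by at most `2 (1 - (s/t)^{n/2})`, which is `O(((t - s)/s)^β)` for every `β ∈ [0, 1]`.
With `β = α/2 < 1` the weight `s^{-β}` is integrable in time; this controls the sources on
`[0, t]`, while the sources on `[t, t']` contribute at most `(t' - t) sup |c|`.
-/

open MeasureTheory
open scoped BigOperators ENNReal Topology

noncomputable section

/-- The heat kernel `Γ(t,x) = (4πt)^{-n/2} exp(-|x|²/(4t))` on `ℝⁿ`. -/
def heatKernel (n : ℕ) (t : ℝ) (x : EuclideanSpace ℝ (Fin n)) : ℝ :=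
  (4 * Real.pi * t) ^ (-(n : ℝ) / 2) * Real.exp (-‖x‖ ^ 2 / (4 * t))

section L1

variable {X : Type*} [MeasurableSpace X] {μ : Measure X}

theorem abs_integral_mul_le {k f : X → ℝ} {M : ℝ} (hk : Integrable k μ)
    (hf : ∀ᵐ y ∂μ, |f y| ≤ M) : |∫ y, k y * f y ∂μ| ≤ (∫ y, |k y| ∂μ) * M := by
  rw [← integral_mul_const, ← Real.norm_eq_abs]
  refine norm_integral_le_of_norm_le (hk.abs.mul_const M) ?_
  filter_upwards [hf] with y hy
  rw [Real.norm_eq_abs, abs_mul]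
  gcongr

theorem integral_abs_sub_le_of_mul_le {f g : X → ℝ} {θ : ℝ} (hf : Integrable f μ)
    (hg : Integrable g μ) (hfg : ∫ y, g y ∂μ = ∫ y, f y ∂μ) (hf0 : ∀ y, 0 ≤ f y) (hθ : θ ≤ 1)
    (hle : ∀ y, θ * f y ≤ g y) :
    ∫ y, |g y - f y| ∂μ ≤ 2 * (1 - θ) * ∫ y, f y ∂μ := by
  have hsub : Integrable (fun y => g y - f y) μ := hg.sub hf
  have hmul : Integrable (fun y => 2 * (1 - θ) * f y) μ := hf.const_mul _
  -- The negative part of `g - f` is at most `(1 - θ) f`, and `g - f` integrates to zero.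
  have hpt : ∀ y, |g y - f y| ≤ g y - f y + 2 * (1 - θ) * f y := fun y => by
    have hθf : 0 ≤ (1 - θ) * f y := mul_nonneg (sub_nonneg.2 hθ) (hf0 y)
    rw [abs_le]
    constructor <;> linarith [hle y]
  calc ∫ y, |g y - f y| ∂μ ≤ ∫ y, (g y - f y + 2 * (1 - θ) * f y) ∂μ :=
        integral_mono hsub.abs (hsub.add hmul) hpt
    _ = 2 * (1 - θ) * ∫ y, f y ∂μ := by
        rw [integral_add hsub hmul, integral_sub hg hf, hfg, sub_self, zero_add,
          integral_const_mul]

end L1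

section Powers

theorem one_sub_rpow_le_mul_inv_sub_one {x p : ℝ} (hx : 0 < x) (hp : 0 ≤ p) :
    1 - x ^ p ≤ p * (x⁻¹ - 1) := by
  have hexp : Real.log x * p + 1 ≤ x ^ p := by
    rw [Real.rpow_def_of_pos hx]
    exact Real.add_one_le_exp _
  have hlog : (1 - x⁻¹) * p ≤ Real.log x * p := by
    gcongr
    exact Real.one_sub_inv_le_log_of_pos hx
  linarith

theorem le_rpow_of_le_one_of_le {a u β : ℝ} (ha : a ≤ 1) (hau : a ≤ u) (hu : 0 ≤ u) (hβ0 : 0 ≤ β)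
    (hβ1 : β ≤ 1) : a ≤ u ^ β := by
  rcases le_total u 1 with hu1 | hu1
  · exact hau.trans (Real.self_le_rpow_of_le_one hu hu1 hβ1)
  · exact ha.trans (Real.one_le_rpow hu1 hβ0)

theorem le_rpow_one_sub_mul_rpow {h T β : ℝ} (hh : 0 ≤ h) (hT : h ≤ T) (hβ0 : 0 ≤ β)
    (hβ1 : β ≤ 1) : h ≤ T ^ (1 - β) * h ^ β :=
  calc h = h ^ (1 - β) * h ^ β := by
        rw [← Real.rpow_add_of_nonneg hh (sub_nonneg.2 hβ1) hβ0, sub_add_cancel, Real.rpow_one]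
    _ ≤ T ^ (1 - β) * h ^ β := by gcongr

theorem integral_sub_rpow_neg {t β : ℝ} (hβ : β < 1) :
    ∫ τ in (0 : ℝ)..t, (t - τ) ^ (-β) = t ^ (1 - β) / (1 - β) := by
  rw [intervalIntegral.integral_comp_sub_left (fun s : ℝ => s ^ (-β)), sub_self, sub_zero,
    integral_rpow (Or.inl (by linarith)), neg_add_eq_sub, Real.zero_rpow (by linarith), sub_zero]

theorem intervalIntegrable_sub_rpow_neg {t β : ℝ} (hβ : β < 1) :
    IntervalIntegrable (fun τ => (t - τ) ^ (-β)) volume 0 t := by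
  have h := (intervalIntegral.intervalIntegrable_rpow' (a := t) (b := 0) (r := -β)
    (by linarith)).comp_sub_left t
  simpa only [sub_self, sub_zero] using h

end Powers

section HeatKernel

variable {n : ℕ} {s t : ℝ}

theorem heatKernel_nonneg (hs : 0 ≤ s) (z : EuclideanSpace ℝ (Fin n)) :
    0 ≤ heatKernel n s z := by
  unfold heatKernel
  positivity

theorem measurable_heatKernel :
    Measurable fun p : ℝ × EuclideanSpace ℝ (Fin n) => heatKernel n p.1 p.2 := by
  unfold heatKernel
  fun_prop

theorem integral_heatKernel (hs : 0 < s) :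
    ∫ z : EuclideanSpace ℝ (Fin n), heatKernel n s z = 1 := by
  have hgauss : ∀ z : EuclideanSpace ℝ (Fin n), heatKernel n s z =
      (4 * Real.pi * s) ^ (-(n : ℝ) / 2) * Real.exp (-(1 / (4 * s)) * ‖z‖ ^ 2) := fun z => by
    unfold heatKernel
    congr 2
    ring
  have hwidth : Real.pi / (1 / (4 * s)) = 4 * Real.pi * s := by field_simp
  simp_rw [hgauss]
  rw [integral_const_mul, GaussianFourier.integral_rexp_neg_mul_sq_norm (by positivity), hwidth,
    finrank_euclideanSpace_fin, ← Real.rpow_add (by positivity), neg_div, neg_add_cancel,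
    Real.rpow_zero]

theorem integrable_heatKernel (hs : 0 < s) :
    Integrable fun z : EuclideanSpace ℝ (Fin n) => heatKernel n s z :=
  .of_integral_ne_zero ((integral_heatKernel hs).trans_ne one_ne_zero)

theorem rpow_mul_heatKernel_le (hs : 0 < s) (hst : s ≤ t) (z : EuclideanSpace ℝ (Fin n)) :
    (s / t) ^ ((n : ℝ) / 2) * heatKernel n s z ≤ heatKernel n t z := by
  have ht : 0 < t := hs.trans_le hst
  have hnormalization : (s / t) ^ ((n : ℝ) / 2) * (4 * Real.pi * s) ^ (-(n : ℝ) / 2) =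
      (4 * Real.pi * t) ^ (-(n : ℝ) / 2) := by
    rw [neg_div, Real.rpow_neg (by positivity), Real.rpow_neg (by positivity),
      ← Real.inv_rpow (by positivity), ← Real.inv_rpow (by positivity),
      ← Real.mul_rpow (by positivity) (by positivity)]
    congr 1
    field_simp
  unfold heatKernel
  rw [← mul_assoc, hnormalization]
  simp only [neg_div]
  gcongr

theorem integral_abs_heatKernel_sub_le {β : ℝ} (hs : 0 < s) (hst : s ≤ t) (hβ0 : 0 ≤ β)
    (hβ1 : β ≤ 1) :
    ∫ z : EuclideanSpace ℝ (Fin n), |heatKernel n t z - heatKernel n s z| ≤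
      2 * ((n : ℝ) / 2 * (t - s)) ^ β * s ^ (-β) := by
  have ht : 0 < t := hs.trans_le hst
  have hratio0 : 0 < s / t := div_pos hs ht
  have hratio1 : (s / t) ^ ((n : ℝ) / 2) ≤ 1 :=
    Real.rpow_le_one hratio0.le ((div_le_one ht).2 hst) (by positivity)
  have hloss : 1 - (s / t) ^ ((n : ℝ) / 2) ≤ (n : ℝ) / 2 * (t - s) / s := by
    have h := one_sub_rpow_le_mul_inv_sub_one (p := (n : ℝ) / 2) hratio0 (by positivity)
    rwa [inv_div, div_sub_one hs.ne', ← mul_div_assoc] at h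
  have hnum : 0 ≤ (n : ℝ) / 2 * (t - s) := mul_nonneg (by positivity) (sub_nonneg.2 hst)
  calc ∫ z : EuclideanSpace ℝ (Fin n), |heatKernel n t z - heatKernel n s z|
      ≤ 2 * (1 - (s / t) ^ ((n : ℝ) / 2)) * ∫ z : EuclideanSpace ℝ (Fin n), heatKernel n s z :=
        integral_abs_sub_le_of_mul_le (integrable_heatKernel hs) (integrable_heatKernel ht)
          ((integral_heatKernel ht).trans (integral_heatKernel hs).symm)
          (heatKernel_nonneg hs.le) hratio1 (rpow_mul_heatKernel_le hs hst)
    _ = 2 * (1 - (s / t) ^ ((n : ℝ) / 2)) := by rw [integral_heatKernel hs, mul_one]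
    _ ≤ 2 * ((n : ℝ) / 2 * (t - s) / s) ^ β := by
        gcongr
        exact le_rpow_of_le_one_of_le (sub_le_self _ (by positivity)) hloss
          (div_nonneg hnum hs.le) hβ0 hβ1
    _ = 2 * ((n : ℝ) / 2 * (t - s)) ^ β * s ^ (-β) := by
        rw [Real.div_rpow hnum hs.le, Real.rpow_neg hs.le, div_eq_mul_inv, mul_assoc]

end HeatKernel

section HeatAverage

/-- The heat semigroup at time `s` applied to `f`: the average of `f` against the heat kernel
centred at `x`. -/
def heatAverage (n : ℕ) (s : ℝ) (f : EuclideanSpace ℝ (Fin n) → ℝ)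
    (x : EuclideanSpace ℝ (Fin n)) : ℝ :=
  ∫ y, heatKernel n s (x - y) * f y

variable {n : ℕ} {s t M : ℝ} {f : EuclideanSpace ℝ (Fin n) → ℝ}

theorem abs_heatAverage_le (hs : 0 < s) (hM : ∀ᵐ y, |f y| ≤ M) (x : EuclideanSpace ℝ (Fin n)) :
    |heatAverage n s f x| ≤ M := by
  have hmass : ∫ y, |heatKernel n s (x - y)| = 1 := by
    simp_rw [abs_of_nonneg (heatKernel_nonneg hs.le _)]
    rw [integral_sub_left_eq_self (heatKernel n s) volume x, integral_heatKernel hs]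
  simpa only [heatAverage, hmass, one_mul] using
    abs_integral_mul_le ((integrable_heatKernel hs).comp_sub_left x) hM

theorem abs_heatAverage_sub_le {β : ℝ} (hs : 0 < s) (hst : s ≤ t) (hβ0 : 0 ≤ β) (hβ1 : β ≤ 1)
    (hf : AEStronglyMeasurable f) (hM : ∀ᵐ y, |f y| ≤ M) (x : EuclideanSpace ℝ (Fin n)) :
    |heatAverage n t f x - heatAverage n s f x| ≤
      2 * ((n : ℝ) / 2 * (t - s)) ^ β * s ^ (-β) * M := by
  have hks := (integrable_heatKernel (n := n) hs).comp_sub_left x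
  have hkt := (integrable_heatKernel (n := n) (hs.trans_le hst)).comp_sub_left x
  have hM0 : 0 ≤ M := hM.exists.elim fun _ hy => (abs_nonneg _).trans hy
  calc |heatAverage n t f x - heatAverage n s f x|
      = |∫ y, (heatKernel n t (x - y) - heatKernel n s (x - y)) * f y| := by
        simp_rw [heatAverage, sub_mul]
        rw [integral_sub (hkt.mul_bdd hf hM) (hks.mul_bdd hf hM)]
    _ ≤ (∫ y, |heatKernel n t (x - y) - heatKernel n s (x - y)|) * M :=
        abs_integral_mul_le (hkt.sub hks) hM
    _ = (∫ z, |heatKernel n t z - heatKernel n s z|) * M := by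
        rw [integral_sub_left_eq_self (fun z => |heatKernel n t z - heatKernel n s z|) volume x]
    _ ≤ 2 * ((n : ℝ) / 2 * (t - s)) ^ β * s ^ (-β) * M := by
        gcongr
        exact integral_abs_heatKernel_sub_le hs hst hβ0 hβ1

end HeatAverage

section Duhamel

/-- The Duhamel term `v(t,x) = ∫₀^t ∫ Γ(t-τ, x-y) c(τ,y) dy dτ` of the source `c`. -/
def duhamel (n : ℕ) (c : ℝ → EuclideanSpace ℝ (Fin n) → ℝ) (t : ℝ)
    (x : EuclideanSpace ℝ (Fin n)) : ℝ :=
  ∫ τ in Set.Ioc 0 t, heatAverage n (t - τ) (c τ) x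

variable {n : ℕ} {c : ℝ → EuclideanSpace ℝ (Fin n) → ℝ} {a b t t' M : ℝ}

theorem intervalIntegrable_heatAverage
    (hc : Measurable fun q : ℝ × EuclideanSpace ℝ (Fin n) => c q.1 q.2) (hab : a ≤ b)
    (hbt : b ≤ t) (hM : ∀ τ ∈ Set.Ioo a b, ∀ y, |c τ y| ≤ M) (x : EuclideanSpace ℝ (Fin n)) :
    IntervalIntegrable (fun τ => heatAverage n (t - τ) (c τ) x) volume a b := by
  have hkernel : Measurable fun q : ℝ × EuclideanSpace ℝ (Fin n) =>
      heatKernel n (t - q.1) (x - q.2) * c q.1 q.2 :=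
    (measurable_heatKernel.comp (by fun_prop :
      Measurable fun q : ℝ × EuclideanSpace ℝ (Fin n) => (t - q.1, x - q.2))).mul hc
  have havg : StronglyMeasurable fun τ => heatAverage n (t - τ) (c τ) x :=
    hkernel.stronglyMeasurable.integral_prod_right
  rw [intervalIntegrable_iff_integrableOn_Ioo_of_le hab]
  refine Measure.integrableOn_of_bounded (M := M) measure_Ioo_lt_top.ne
    havg.aestronglyMeasurable (ae_restrict_of_forall_mem measurableSet_Ioo fun τ hτ => ?_)
  exact abs_heatAverage_le (sub_pos.2 (hτ.2.trans_le hbt)) (ae_of_all _ (hM τ hτ)) x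

theorem duhamel_sub_duhamel
    (hc : Measurable fun q : ℝ × EuclideanSpace ℝ (Fin n) => c q.1 q.2) (ht : 0 ≤ t)
    (htt' : t ≤ t') (hM : ∀ τ ∈ Set.Ioo 0 t', ∀ y, |c τ y| ≤ M)
    (x : EuclideanSpace ℝ (Fin n)) :
    duhamel n c t' x - duhamel n c t x =
      (∫ τ in (0 : ℝ)..t,
        (heatAverage n (t' - τ) (c τ) x - heatAverage n (t - τ) (c τ) x)) +
      ∫ τ in t..t', heatAverage n (t' - τ) (c τ) x := by
  have hM_far : ∀ τ ∈ Set.Ioo 0 t, ∀ y, |c τ y| ≤ M := fun τ hτ =>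
    hM τ ⟨hτ.1, hτ.2.trans_le htt'⟩
  have hM_near : ∀ τ ∈ Set.Ioo t t', ∀ y, |c τ y| ≤ M := fun τ hτ =>
    hM τ ⟨ht.trans_lt hτ.1, hτ.2⟩
  have hfar' := intervalIntegrable_heatAverage hc ht htt' hM_far x
  have hfar := intervalIntegrable_heatAverage hc ht le_rfl hM_far x
  have hnear := intervalIntegrable_heatAverage hc htt' le_rfl hM_near x
  rw [duhamel, duhamel, ← intervalIntegral.integral_of_le (ht.trans htt'),
    ← intervalIntegral.integral_of_le ht, intervalIntegral.integral_sub hfar' hfar,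
    ← intervalIntegral.integral_add_adjacent_intervals hfar' hnear, add_sub_right_comm]

theorem abs_integral_heatAverage_le (hab : a ≤ b) (hbt : b ≤ t)
    (hM : ∀ τ ∈ Set.Ioo a b, ∀ y, |c τ y| ≤ M) (x : EuclideanSpace ℝ (Fin n)) :
    |∫ τ in a..b, heatAverage n (t - τ) (c τ) x| ≤ M * (b - a) := by
  rw [← abs_of_nonneg (sub_nonneg.2 hab), ← Real.norm_eq_abs]
  refine intervalIntegral.norm_integral_le_of_norm_le_const_ae ?_
  filter_upwards [Measure.ae_ne volume b] with τ hτb hτ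
  rw [Set.uIoc_of_le hab] at hτ
  have hτ_lt : τ < b := hτ.2.lt_of_ne hτb
  exact abs_heatAverage_le (sub_pos.2 (hτ_lt.trans_le hbt)) (ae_of_all _ (hM τ ⟨hτ.1, hτ_lt⟩)) x

theorem abs_integral_heatAverage_sub_le {β : ℝ} (hβ0 : 0 ≤ β) (hβ1 : β < 1)
    (hc : ∀ τ, Measurable (c τ)) (ht : 0 ≤ t) (htt' : t ≤ t')
    (hM : ∀ τ ∈ Set.Ioo 0 t, ∀ y, |c τ y| ≤ M) (x : EuclideanSpace ℝ (Fin n)) :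
    |∫ τ in (0 : ℝ)..t, (heatAverage n (t' - τ) (c τ) x - heatAverage n (t - τ) (c τ) x)| ≤
      2 * ((n : ℝ) / 2 * (t' - t)) ^ β * M * (t ^ (1 - β) / (1 - β)) := by
  rw [← Real.norm_eq_abs, ← integral_sub_rpow_neg hβ1, ← intervalIntegral.integral_const_mul]
  refine intervalIntegral.norm_integral_le_of_norm_le ht ?_
    ((intervalIntegrable_sub_rpow_neg hβ1).const_mul _)
  filter_upwards [Measure.ae_ne volume t] with τ hτt hτ
  have hτ_lt : τ < t := hτ.2.lt_of_ne hτt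
  have hdiff := abs_heatAverage_sub_le (sub_pos.2 hτ_lt) (sub_le_sub_right htt' τ) hβ0 hβ1.le
    (hc τ).aestronglyMeasurable (ae_of_all _ (hM τ ⟨hτ.1, hτ_lt⟩)) x
  rw [sub_sub_sub_cancel_right] at hdiff
  exact hdiff.trans_eq (mul_right_comm _ _ _)

theorem abs_duhamel_sub_le {β : ℝ} (hβ0 : 0 ≤ β) (hβ1 : β < 1)
    (hc : Measurable fun q : ℝ × EuclideanSpace ℝ (Fin n) => c q.1 q.2) (ht : 0 ≤ t)
    (htt' : t ≤ t') (hM : ∀ τ ∈ Set.Ioo 0 t', ∀ y, |c τ y| ≤ M)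
    (x : EuclideanSpace ℝ (Fin n)) :
    |duhamel n c t' x - duhamel n c t x| ≤
      2 * ((n : ℝ) / 2 * (t' - t)) ^ β * M * (t ^ (1 - β) / (1 - β)) + M * (t' - t) := by
  rw [duhamel_sub_duhamel hc ht htt' hM x]
  exact (abs_add_le _ _).trans (add_le_add
    (abs_integral_heatAverage_sub_le hβ0 hβ1 (fun _ => hc.of_uncurry_left) ht htt'
      (fun τ hτ => hM τ ⟨hτ.1, hτ.2.trans_le htt'⟩) x)
    (abs_integral_heatAverage_le htt' le_rfl (fun τ hτ => hM τ ⟨ht.trans_lt hτ.1, hτ.2⟩) x))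

end Duhamel

theorem statement9_general (n : ℕ) {α : ℝ} (hα : α ∈ Set.Ico (0 : ℝ) 2) :
    ∃ C : ℝ, 0 < C ∧
      ∀ T : ℝ, ∀ c : ℝ → EuclideanSpace ℝ (Fin n) → ℝ,
        Measurable (fun q : ℝ × EuclideanSpace ℝ (Fin n) => c q.1 q.2) →
      ∀ M : ℝ, (∀ τ ∈ Set.Ioo (0 : ℝ) T, ∀ y, |c τ y| ≤ M) →
      ∀ t t' : ℝ, 0 ≤ t → t < t' → t' ≤ T → ∀ x : EuclideanSpace ℝ (Fin n),
        |duhamel n c t' x - duhamel n c t x| ≤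
          C * T ^ (1 - α / 2) * (t' - t) ^ (α / 2) * M := by
  set β := α / 2 with hβ
  have hβ0 : 0 ≤ β := by linarith [hα.1]
  have hβ1 : 0 < 1 - β := by linarith [hα.2]
  refine ⟨2 * ((n : ℝ) / 2) ^ β / (1 - β) + 1, by positivity, ?_⟩
  intro T c hc M hM t t' ht htt' ht'T x
  have hh : 0 ≤ t' - t := sub_nonneg.2 htt'.le
  have hM0 : 0 ≤ M := by
    obtain ⟨τ, hτ⟩ := Set.nonempty_Ioo.2 (ht.trans_lt (htt'.trans_le ht'T))
    exact (abs_nonneg _).trans (hM τ hτ 0)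
  calc |duhamel n c t' x - duhamel n c t x|
      ≤ 2 * ((n : ℝ) / 2 * (t' - t)) ^ β * M * (t ^ (1 - β) / (1 - β)) + M * (t' - t) :=
        abs_duhamel_sub_le hβ0 (sub_pos.1 hβ1) hc ht htt'.le
          (fun τ hτ => hM τ ⟨hτ.1, hτ.2.trans_le ht'T⟩) x
    _ ≤ 2 * ((n : ℝ) / 2 * (t' - t)) ^ β * M * (T ^ (1 - β) / (1 - β)) +
          M * (T ^ (1 - β) * (t' - t) ^ β) := by
        gcongr
        · exact htt'.le.trans ht'T
        · exact le_rpow_one_sub_mul_rpow hh (by linarith) hβ0 (sub_pos.1 hβ1).le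
    _ = (2 * ((n : ℝ) / 2) ^ β / (1 - β) + 1) * T ^ (1 - β) * (t' - t) ^ β * M := by
        rw [Real.mul_rpow (by positivity) hh]
        ring

/-- **Time Hölder continuity of the Duhamel term for a bounded source `c`**:
`|v(t',x) - v(t,x)| ≤ C T^{1-α/2} (t'-t)^{α/2} ‖c‖_∞` where
`v(t,x) = ∫₀^t ∫ Γ(t-τ, x-y) c(τ,y) dy dτ`. -/
theorem statement9 (n : ℕ) (hn : 1 ≤ n) (α : ℝ) (hα : α ∈ Set.Ioo (0 : ℝ) 1) :
    ∃ C : ℝ, 0 < C ∧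
      ∀ T : ℝ, 0 < T →
      ∀ c : ℝ → EuclideanSpace ℝ (Fin n) → ℝ,
        Measurable (fun q : ℝ × EuclideanSpace ℝ (Fin n) => c q.1 q.2) →
      ∀ M : ℝ, (∀ τ ∈ Set.Icc (0 : ℝ) T, ∀ y, |c τ y| ≤ M) →
      ∀ t t' : ℝ, 0 ≤ t → t < t' → t' ≤ T → ∀ x : EuclideanSpace ℝ (Fin n),
        |(∫ τ in Set.Ioc (0 : ℝ) t', ∫ y, heatKernel n (t' - τ) (x - y) * c τ y) -
         (∫ τ in Set.Ioc (0 : ℝ) t, ∫ y, heatKernel n (t - τ) (x - y) * c τ y)| ≤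
          C * T ^ (1 - α / 2) * (t' - t) ^ (α / 2) * M := by
  obtain ⟨C, hC, hbound⟩ := statement9_general n ⟨hα.1.le, hα.2.trans one_lt_two⟩
  exact ⟨C, hC, fun T _ c hc M hM => hbound T c hc M fun τ hτ => hM τ (Set.Ioo_subset_Icc_self hτ)⟩
end
end

section
/- Let n ≥ 1, α ∈ (0,1), T > 0, and let f : [0,T]×ℝⁿ → ℝ^{n×n} be continuous with K := sup_{τ∈[0,T]} sup_{y ≠ y′} |f(τ,y) − f(τ,y′)|/|y−y′|^α < ∞ (the matrix norm being entrywise sup). Define v(t,x) := Σ_{i,j=1}^n ∫₀^t ∫_{ℝⁿ} ∂²_{x_i x_j}Γ(t−τ, x−y) · (f_{ij}(τ,y) − f_{ij}(τ,x)) dy dτ, the integral being absolutely convergent. Then there is a constant C depending only on n and α such that: (i) |v(t,x′) − v(t,x)| ≤ C·K·|x′−x|^α for all t ∈ (0,T] and x, x′ ∈ ℝⁿ; (ii) |v(t,x)| ≤ C·K·t^{α/2} for all t ∈ (0,T] and x ∈ ℝⁿ; (iii) |v(t′,x) − v(t,x)| ≤ C·K·(t′−t)^{α/2} for all 0 ≤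 t < t′ ≤ T and x ∈ ℝⁿ. -/
open MeasureTheory
open scoped BigOperators ENNReal Topology

noncomputable section

/-- The `i`-th standard basis vector of `ℝⁿ`. -/
def stdBasis (n : ℕ) (i : Fin n) : EuclideanSpace ℝ (Fin n) :=
  EuclideanSpace.single i 1

/-- Second spatial partial derivative `∂²_{x_i x_j} Γ(t,·)` of the heat kernel. -/
def d2Heat (n : ℕ) (i j : Fin n) (t : ℝ) (x : EuclideanSpace ℝ (Fin n)) : ℝ :=
  fderiv ℝ (fun z => fderiv ℝ (heatKernel n t) z (stdBasis n j)) x (stdBasis n i)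

/-- The integrand `Σ_{i,j} ∂²_{ij}Γ(t-τ, x-y) (f_{ij}(τ,y) - f_{ij}(τ,x))`. -/
def d2Integrand (n : ℕ) (f : ℝ → EuclideanSpace ℝ (Fin n) → Matrix (Fin n) (Fin n) ℝ)
    (t : ℝ) (x : EuclideanSpace ℝ (Fin n)) (τ : ℝ) (y : EuclideanSpace ℝ (Fin n)) : ℝ :=
  ∑ i : Fin n, ∑ j : Fin n, d2Heat n i j (t - τ) (x - y) * (f τ y i j - f τ x i j)

/-!
The second derivatives of `Γ(s, ·)` are at most `C s⁻¹ Γ(4s, ·)` in absolute value, so pairing them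
with an increment of a function that is `α`-Hölder in space gives `O(s ^ (α/2 - 1))`, which is
integrable at `s = t - τ = 0`; this is the sup bound. By the mean value theorem, a translation in
space by `h` with `|h|² ≤ s`, or in time by `δ ≤ s`, gains a further factor `|h| s^(-1/2)` or
`δ s⁻¹`. As `∂²_{x_i x_j}Γ(s, ·)` has mean zero, the subtracted value `f_{ij}(τ, x)` may be kept
fixed while the kernel is translated. For the Hölder bounds one splits the time integral at
`t - τ = ρ`, with `ρ = |x' - x|²` or `ρ = t' - t`: the recent past is estimated by the sup bound,
the remote past by the gain `(ρ/s)^p` with `p = 1/2` or `p = 1`, and both contribute `O(ρ^(α/2))`.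
-/

open scoped NNReal

section HeatKernel

variable {n : ℕ}

lemma heatKernel_pos {t : ℝ} (ht : 0 < t) (z : EuclideanSpace ℝ (Fin n)) :
    0 < heatKernel n t z := by
  unfold heatKernel; positivity

lemma integral_heatKernel_s13 (n : ℕ) {t : ℝ} (ht : 0 < t) : ∫ z, heatKernel n t z = 1 := by
  have gaussian := GaussianFourier.integral_rexp_neg_mul_sq_norm
    (V := EuclideanSpace ℝ (Fin n)) (b := (4 * t)⁻¹) (by positivity)
  have exponent (z : EuclideanSpace ℝ (Fin n)) : -‖z‖ ^ 2 / (4 * t) = -(4 * t)⁻¹ * ‖z‖ ^ 2 := by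
    ring
  simp only [heatKernel, exponent]
  rw [integral_const_mul, gaussian, finrank_euclideanSpace_fin, div_inv_eq_mul, neg_div,
    show Real.pi * (4 * t) = 4 * Real.pi * t by ring, Real.rpow_neg (by positivity)]
  exact inv_mul_cancel₀ (by positivity)

lemma integrable_heatKernel_s13 (n : ℕ) {t : ℝ} (ht : 0 < t) : Integrable (heatKernel n t) :=
  .of_integral_ne_zero (by rw [integral_heatKernel_s13 n ht]; exact one_ne_zero)

lemma integrable_of_le_heatKernel {k : EuclideanSpace ℝ (Fin n) → ℝ} {B r : ℝ} (hr : 0 < r)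
    (hk_cont : Continuous k) (hk : ∀ z, |k z| ≤ B * heatKernel n r z) : Integrable k :=
  ((integrable_heatKernel_s13 n hr).const_mul B).mono' hk_cont.aestronglyMeasurable (.of_forall hk)

lemma heatKernel_eq_mul_heatKernel {s t : ℝ} (hs : 0 < s) (ht : 0 < t)
    (w z : EuclideanSpace ℝ (Fin n)) :
    heatKernel n s w = (t / s) ^ ((n : ℝ) / 2) *
      Real.exp (‖z‖ ^ 2 / (4 * t) - ‖w‖ ^ 2 / (4 * s)) * heatKernel n t z := by
  have normalization : (4 * Real.pi * s) ^ (-(n : ℝ) / 2) =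
      (t / s) ^ ((n : ℝ) / 2) * (4 * Real.pi * t) ^ (-(n : ℝ) / 2) := by
    rw [neg_div, Real.rpow_neg (by positivity), Real.rpow_neg (by positivity),
      ← Real.inv_rpow (by positivity), ← Real.inv_rpow (by positivity),
      ← Real.mul_rpow (by positivity) (by positivity)]
    congr 1
    field_simp
  have exponential : Real.exp (-‖w‖ ^ 2 / (4 * s)) =
      Real.exp (‖z‖ ^ 2 / (4 * t) - ‖w‖ ^ 2 / (4 * s)) * Real.exp (-‖z‖ ^ 2 / (4 * t)) := by
    rw [← Real.exp_add]
    congr 1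
    ring
  rw [heatKernel, heatKernel, normalization, exponential]
  ring

lemma heatKernel_le_rpow_mul_heatKernel {s t : ℝ} (hs : 0 < s) (hst : s ≤ t)
    (z : EuclideanSpace ℝ (Fin n)) :
    heatKernel n s z ≤ (t / s) ^ ((n : ℝ) / 2) * heatKernel n t z := by
  have ht : 0 < t := hs.trans_le hst
  have exponent_nonpos : ‖z‖ ^ 2 / (4 * t) - ‖z‖ ^ 2 / (4 * s) ≤ 0 := by
    rw [sub_nonpos]; gcongr
  rw [heatKernel_eq_mul_heatKernel hs ht z z]
  have := (heatKernel_pos ht z).le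
  gcongr
  exact mul_le_of_le_one_right (by positivity) (Real.exp_le_one_iff.2 exponent_nonpos)

lemma heatKernel_le_exp_mul_heatKernel_two_mul {s : ℝ} (hs : 0 < s)
    (w z : EuclideanSpace ℝ (Fin n)) :
    heatKernel n s w ≤
      2 ^ ((n : ℝ) / 2) * Real.exp (‖w - z‖ ^ 2 / (4 * s)) * heatKernel n (2 * s) z := by
  have parallelogram : ‖z‖ ^ 2 ≤ 2 * ‖w‖ ^ 2 + 2 * ‖w - z‖ ^ 2 := by
    have := parallelogram_law_with_norm ℝ w (w - z)
    rw [sub_sub_cancel] at this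
    nlinarith [sq_nonneg ‖w + (w - z)‖]
  have exponent : ‖z‖ ^ 2 / (4 * (2 * s)) - ‖w‖ ^ 2 / (4 * s) ≤ ‖w - z‖ ^ 2 / (4 * s) := by
    rw [sub_le_iff_le_add, ← add_div, div_le_div_iff₀ (by positivity) (by positivity)]
    nlinarith
  rw [heatKernel_eq_mul_heatKernel hs (by positivity : 0 < 2 * s) w z,
    mul_div_cancel_right₀ _ hs.ne']
  have := (heatKernel_pos (by positivity : 0 < 2 * s) z).le
  gcongr

/-- The constant with which a weight `(1 + |z|²/s) ^ p` is absorbed into a heat kernel by doubling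
its time. -/
def absorptionConst (n : ℕ) (p : ℝ) : ℝ := 2 ^ ((n : ℝ) / 2) * (1 + 8 * p) ^ p

lemma absorptionConst_pos (n : ℕ) {p : ℝ} (hp : 0 < p) : 0 < absorptionConst n p := by
  unfold absorptionConst; positivity

lemma one_add_rpow_le_mul_exp {p q : ℝ} (hp : 0 < p) (hq : 0 ≤ q) :
    (1 + q) ^ p ≤ (1 + 8 * p) ^ p * Real.exp (q / 8) := by
  have base : 1 + q ≤ (1 + 8 * p) * Real.exp (q / (8 * p)) := by
    calc 1 + q ≤ (1 + 8 * p) * (q / (8 * p) + 1) := by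
          rw [show (1 + 8 * p) * (q / (8 * p) + 1) = 1 + q + (q / (8 * p) + 8 * p) by
            field_simp; ring]
          exact le_add_of_nonneg_right (by positivity)
      _ ≤ _ := by gcongr; exact Real.add_one_le_exp _
  calc (1 + q) ^ p ≤ ((1 + 8 * p) * Real.exp (q / (8 * p))) ^ p := by gcongr
    _ = _ := by
      rw [Real.mul_rpow (by positivity) (by positivity), ← Real.exp_mul]
      congr 2
      field_simp

lemma one_add_rpow_mul_heatKernel_le {p s : ℝ} (hp : 0 < p) (hs : 0 < s)
    (z : EuclideanSpace ℝ (Fin n)) :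
    (1 + ‖z‖ ^ 2 / s) ^ p * heatKernel n s z ≤ absorptionConst n p * heatKernel n (2 * s) z := by
  have exponent : ‖z‖ ^ 2 / (4 * (2 * s)) - ‖z‖ ^ 2 / (4 * s) = -(‖z‖ ^ 2 / s / 8) := by
    field_simp; ring
  have := (heatKernel_pos (by positivity : 0 < 2 * s) z).le
  rw [heatKernel_eq_mul_heatKernel hs (by positivity : 0 < 2 * s) z z,
    mul_div_cancel_right₀ _ hs.ne', exponent]
  calc _ ≤ (1 + 8 * p) ^ p * Real.exp (‖z‖ ^ 2 / s / 8) *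
        (2 ^ ((n : ℝ) / 2) * Real.exp (-(‖z‖ ^ 2 / s / 8)) * heatKernel n (2 * s) z) := by
        gcongr; exact one_add_rpow_le_mul_exp hp (by positivity)
    _ = _ := by rw [absorptionConst, Real.exp_neg]; field_simp

lemma norm_rpow_le_mul_one_add_rpow {E : Type*} [SeminormedAddCommGroup E] {α s : ℝ}
    (hα : 0 ≤ α) (hs : 0 < s) (z : E) :
    ‖z‖ ^ α ≤ s ^ (α / 2) * (1 + ‖z‖ ^ 2 / s) ^ (α / 2) := by
  calc ‖z‖ ^ α = (‖z‖ ^ 2) ^ (α / 2) := by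
        rw [← Real.rpow_natCast_mul (norm_nonneg z), Nat.cast_ofNat, mul_div_cancel₀ _ two_ne_zero]
    _ ≤ (s * (1 + ‖z‖ ^ 2 / s)) ^ (α / 2) := by
        gcongr
        rw [mul_add, mul_div_cancel₀ _ hs.ne']
        linarith
    _ = _ := Real.mul_rpow hs.le (by positivity)

lemma norm_rpow_mul_heatKernel_le {α s : ℝ} (hα : 0 < α) (hs : 0 < s)
    (z : EuclideanSpace ℝ (Fin n)) :
    ‖z‖ ^ α * heatKernel n s z ≤
      s ^ (α / 2) * absorptionConst n (α / 2) * heatKernel n (2 * s) z := by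
  have := (heatKernel_pos hs z).le
  calc ‖z‖ ^ α * heatKernel n s z
      ≤ s ^ (α / 2) * (1 + ‖z‖ ^ 2 / s) ^ (α / 2) * heatKernel n s z := by
        gcongr; exact norm_rpow_le_mul_one_add_rpow hα.le hs z
    _ ≤ _ := by
        rw [mul_assoc, mul_assoc]
        gcongr _ * ?_
        exact one_add_rpow_mul_heatKernel_le (half_pos hα) hs z

end HeatKernel

section SecondDerivative

variable {n : ℕ} (i j : Fin n)

lemma hasFDerivAt_heatKernel (t : ℝ) (z : EuclideanSpace ℝ (Fin n)) :
    HasFDerivAt (heatKernel n t) (-(heatKernel n t z / (2 * t)) • innerSL ℝ z) z := by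
  have gaussian := (((hasStrictFDerivAt_norm_sq z).hasFDerivAt.neg.mul_const
    (4 * t)⁻¹).exp).const_mul ((4 * Real.pi * t) ^ (-(n : ℝ) / 2))
  refine gaussian.congr_fderiv ?_
  ext w
  simp only [div_eq_mul_inv, neg_mul, Pi.neg_apply, mul_inv_rev, smul_neg, neg_apply, smul_apply,
    coe_innerSL_apply, nsmul_eq_mul, Nat.cast_ofNat, smul_eq_mul, heatKernel, neg_smul, neg_inj]
  ring

lemma hasDerivAt_heatKernel_time {s : ℝ} (hs : 0 < s) (z : EuclideanSpace ℝ (Fin n)) :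
    HasDerivAt (fun t => heatKernel n t z)
      ((‖z‖ ^ 2 / (4 * s ^ 2) - n / (2 * s)) * heatKernel n s z) s := by
  have power := ((hasDerivAt_id' s).const_mul (4 * Real.pi)).rpow_const (p := -(n : ℝ) / 2)
    (.inl (by positivity))
  have exponential := ((hasDerivAt_const s (-‖z‖ ^ 2)).fun_div ((hasDerivAt_id' s).const_mul 4)
    (by positivity)).exp
  refine (power.fun_mul exponential).congr_deriv ?_
  rw [Real.rpow_sub_one (by positivity), heatKernel]
  field_simp
  ring

lemma fderiv_heatKernel_stdBasis (t : ℝ) (z : EuclideanSpace ℝ (Fin n)) :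
    fderiv ℝ (heatKernel n t) z (stdBasis n j) = -(heatKernel n t z / (2 * t)) * z j := by
  rw [(hasFDerivAt_heatKernel t z).fderiv]
  simp [stdBasis, EuclideanSpace.inner_single_right]

/-- The polynomial `∂²_{x_i x_j}Γ / Γ = z_i z_j / (4s²) - δ_{ij} / (2s)`. -/
def hessianFactor (s : ℝ) (z : EuclideanSpace ℝ (Fin n)) : ℝ :=
  z i * z j / (4 * s ^ 2) - (if i = j then 1 else 0) / (2 * s)

lemma hasFDerivAt_coord (z : EuclideanSpace ℝ (Fin n)) :
    HasFDerivAt (fun z : EuclideanSpace ℝ (Fin n) => z i)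
      (EuclideanSpace.proj i : EuclideanSpace ℝ (Fin n) →L[ℝ] ℝ) z :=
  (EuclideanSpace.proj i : EuclideanSpace ℝ (Fin n) →L[ℝ] ℝ).hasFDerivAt

lemma hasFDerivAt_gradient_heatKernel (t : ℝ) (z : EuclideanSpace ℝ (Fin n)) :
    HasFDerivAt (fun z => fderiv ℝ (heatKernel n t) z (stdBasis n j))
      (-(heatKernel n t z / (2 * t)) • EuclideanSpace.proj j +
        (z j * (heatKernel n t z / (2 * t) / (2 * t))) • innerSL ℝ z) z := by
  have product := ((hasFDerivAt_heatKernel t z).mul_const (2 * t)⁻¹).fun_neg.fun_mul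
    (hasFDerivAt_coord j z)
  rw [funext (fderiv_heatKernel_stdBasis j t)]
  refine product.congr_fderiv ?_
  ext w
  simp only [mul_inv_rev, neg_smul, smul_neg, neg_neg, add_apply, neg_apply, smul_apply,
    PiLp.proj_apply, smul_eq_mul, coe_innerSL_apply]
  ring

lemma d2Heat_eq_heatKernel_mul_hessianFactor (t : ℝ) (z : EuclideanSpace ℝ (Fin n)) :
    d2Heat n i j t z = heatKernel n t z * hessianFactor i j t z := by
  rw [d2Heat, (hasFDerivAt_gradient_heatKernel j t z).fderiv, hessianFactor]
  simp only [neg_smul, stdBasis, add_apply, neg_apply, smul_apply, PiLp.proj_apply,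
    PiLp.single_apply, eq_comm, smul_eq_mul, mul_ite, mul_one, mul_zero, coe_innerSL_apply,
    EuclideanSpace.inner_single_right, Real.ringHom_apply, one_mul]
  split_ifs <;> ring

lemma abs_coord_mul_coord_le (z : EuclideanSpace ℝ (Fin n)) : |z i * z j| ≤ ‖z‖ ^ 2 := by
  rw [abs_mul, sq]
  gcongr <;> exact PiLp.norm_apply_le z _

lemma abs_hessianFactor_le {s : ℝ} (hs : 0 < s) (z : EuclideanSpace ℝ (Fin n)) :
    |hessianFactor i j s z| ≤ s⁻¹ * (1 + ‖z‖ ^ 2 / s) / 2 := by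
  have diagonal : |(if i = j then 1 else 0) / (2 * s)| ≤ 1 / (2 * s) := by
    rw [abs_div, abs_of_pos (by positivity : 0 < 2 * s)]
    gcongr
    split_ifs <;> simp
  have quadratic : |z i * z j / (4 * s ^ 2)| ≤ ‖z‖ ^ 2 / (4 * s ^ 2) := by
    rw [abs_div, abs_of_pos (by positivity : 0 < 4 * s ^ 2)]
    gcongr
    exact abs_coord_mul_coord_le i j z
  calc |hessianFactor i j s z| ≤ ‖z‖ ^ 2 / (4 * s ^ 2) + 1 / (2 * s) :=
        (abs_sub _ _).trans (add_le_add quadratic diagonal)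
    _ ≤ ‖z‖ ^ 2 / (2 * s ^ 2) + 1 / (2 * s) := by gcongr; norm_num
    _ = _ := by field_simp; ring

lemma hasFDerivAt_hessianFactor (s : ℝ) (z : EuclideanSpace ℝ (Fin n)) :
    HasFDerivAt (hessianFactor i j s)
      ((4 * s ^ 2)⁻¹ • (z i • (EuclideanSpace.proj j : EuclideanSpace ℝ (Fin n) →L[ℝ] ℝ) +
        z j • EuclideanSpace.proj i)) z :=
  (((hasFDerivAt_coord i z).fun_mul (hasFDerivAt_coord j z)).mul_const (4 * s ^ 2)⁻¹).sub_const _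

lemma hasDerivAt_hessianFactor_time {s : ℝ} (hs : s ≠ 0) (z : EuclideanSpace ℝ (Fin n)) :
    HasDerivAt (fun t => hessianFactor i j t z)
      (-(z i * z j) / (2 * s ^ 3) + (if i = j then 1 else 0) / (2 * s ^ 2)) s := by
  have quadratic := (hasDerivAt_const s (z i * z j)).fun_div
    (((hasDerivAt_id' s).fun_pow 2).const_mul 4) (by positivity)
  have diagonal := (hasDerivAt_const s (if i = j then (1 : ℝ) else 0)).fun_div
    ((hasDerivAt_id' s).const_mul 2) (by positivity)
  refine (quadratic.fun_sub diagonal).congr_deriv ?_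
  field_simp
  ring

lemma norm_proj_le_one :
    ‖(EuclideanSpace.proj i : EuclideanSpace ℝ (Fin n) →L[ℝ] ℝ)‖ ≤ 1 :=
  ContinuousLinearMap.opNorm_le_bound _ zero_le_one fun z => by
    simpa using PiLp.norm_apply_le z i

lemma norm_fderiv_heatKernel {s : ℝ} (hs : 0 < s) (z : EuclideanSpace ℝ (Fin n)) :
    ‖fderiv ℝ (heatKernel n s) z‖ = heatKernel n s z / (2 * s) * ‖z‖ := by
  have := heatKernel_pos hs z
  rw [(hasFDerivAt_heatKernel s z).fderiv, norm_smul, norm_neg, innerSL_apply_norm,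
    Real.norm_of_nonneg (by positivity)]

lemma norm_fderiv_hessianFactor_le (s : ℝ) (z : EuclideanSpace ℝ (Fin n)) :
    ‖fderiv ℝ (hessianFactor i j s) z‖ ≤ ‖z‖ / (2 * s ^ 2) := by
  rw [(hasFDerivAt_hessianFactor i j s z).fderiv, norm_smul, Real.norm_of_nonneg (by positivity)]
  calc _ ≤ (4 * s ^ 2)⁻¹ * (‖z‖ * 1 + ‖z‖ * 1) := by
        gcongr
        refine (norm_add_le _ _).trans ?_
        rw [norm_smul, norm_smul]
        gcongr
        exacts [PiLp.norm_apply_le z i, norm_proj_le_one j, PiLp.norm_apply_le z j,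
          norm_proj_le_one i]
    _ = _ := by field_simp; ring

lemma hasFDerivAt_d2Heat (s : ℝ) (z : EuclideanSpace ℝ (Fin n)) :
    HasFDerivAt (d2Heat n i j s) (heatKernel n s z • fderiv ℝ (hessianFactor i j s) z +
      hessianFactor i j s z • fderiv ℝ (heatKernel n s) z) z := by
  rw [funext (d2Heat_eq_heatKernel_mul_hessianFactor i j s)]
  exact (hasFDerivAt_heatKernel s z).differentiableAt.hasFDerivAt.fun_mul
    (hasFDerivAt_hessianFactor i j s z).differentiableAt.hasFDerivAt

lemma continuous_d2Heat (s : ℝ) : Continuous (d2Heat n i j s) :=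
  continuous_iff_continuousAt.2 fun z => (hasFDerivAt_d2Heat i j s z).continuousAt

lemma norm_fderiv_d2Heat_le {s : ℝ} (hs : 0 < s) (z : EuclideanSpace ℝ (Fin n)) :
    ‖fderiv ℝ (d2Heat n i j s) z‖ ≤
      s ^ (-(3 / 2) : ℝ) * ((1 + ‖z‖ ^ 2 / s) ^ 2 * heatKernel n s z) := by
  have kernel_pos := heatKernel_pos hs z
  have one_le : 1 ≤ 1 + ‖z‖ ^ 2 / s := le_add_of_nonneg_right (by positivity)
  have norm_le : ‖z‖ ≤ s ^ (1 / 2 : ℝ) * (1 + ‖z‖ ^ 2 / s) := by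
    calc ‖z‖ = ‖z‖ ^ (1 : ℝ) := (Real.rpow_one _).symm
      _ ≤ s ^ (1 / 2 : ℝ) * (1 + ‖z‖ ^ 2 / s) ^ (1 / 2 : ℝ) :=
        norm_rpow_le_mul_one_add_rpow zero_le_one hs z
      _ ≤ _ := by gcongr; exact Real.rpow_le_self_of_one_le one_le (by norm_num)
  have power : s ^ (-(3 / 2) : ℝ) = s ^ (1 / 2 : ℝ) / s ^ 2 := by
    rw [← Real.rpow_natCast, ← Real.rpow_sub hs]
    norm_num
  rw [(hasFDerivAt_d2Heat i j s z).fderiv]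
  calc _ ≤ heatKernel n s z * (‖z‖ / (2 * s ^ 2)) +
        s⁻¹ * (1 + ‖z‖ ^ 2 / s) / 2 * (heatKernel n s z / (2 * s) * ‖z‖) := by
        refine (norm_add_le _ _).trans ?_
        rw [norm_smul, norm_smul, norm_fderiv_heatKernel hs, Real.norm_of_nonneg kernel_pos.le]
        gcongr
        exacts [norm_fderiv_hessianFactor_le i j s z, abs_hessianFactor_le i j hs z]
    _ = ‖z‖ * (heatKernel n s z * (2⁻¹ * 1 + (1 + ‖z‖ ^ 2 / s) / 4) / s ^ 2) := by
        field_simp; ring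
    _ ≤ s ^ (1 / 2 : ℝ) * (1 + ‖z‖ ^ 2 / s) *
        (heatKernel n s z * (2⁻¹ * (1 + ‖z‖ ^ 2 / s) + (1 + ‖z‖ ^ 2 / s) / 2) / s ^ 2) := by
        gcongr; norm_num
    _ = _ := by rw [power]; ring

lemma abs_deriv_hessianFactor_time_le {s : ℝ} (hs : 0 < s) (z : EuclideanSpace ℝ (Fin n)) :
    |deriv (fun t => hessianFactor i j t z) s| ≤ s⁻¹ ^ 2 * (1 + ‖z‖ ^ 2 / s) / 2 := by
  have diagonal : |(if i = j then (1 : ℝ) else 0) / (2 * s ^ 2)| ≤ 1 / (2 * s ^ 2) := by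
    rw [abs_div, abs_of_pos (by positivity : 0 < 2 * s ^ 2)]
    gcongr
    split_ifs <;> simp
  have quadratic : |-(z i * z j) / (2 * s ^ 3)| ≤ ‖z‖ ^ 2 / (2 * s ^ 3) := by
    rw [abs_div, abs_neg, abs_of_pos (by positivity : 0 < 2 * s ^ 3)]
    gcongr
    exact abs_coord_mul_coord_le i j z
  rw [(hasDerivAt_hessianFactor_time i j hs.ne' z).deriv]
  calc _ ≤ ‖z‖ ^ 2 / (2 * s ^ 3) + 1 / (2 * s ^ 2) :=
        (abs_add_le _ _).trans (add_le_add quadratic diagonal)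
    _ = _ := by field_simp; ring

lemma abs_deriv_heatKernel_time_le {s : ℝ} (hs : 0 < s) (z : EuclideanSpace ℝ (Fin n)) :
    |deriv (fun t => heatKernel n t z) s| ≤
      (n + 1) * (s⁻¹ * (1 + ‖z‖ ^ 2 / s) / 2 * heatKernel n s z) := by
  have kernel_pos := heatKernel_pos hs z
  have quadratic_nonneg : 0 ≤ ‖z‖ ^ 2 / s := by positivity
  rw [(hasDerivAt_heatKernel_time hs z).deriv, abs_mul, abs_of_pos kernel_pos]
  calc _ ≤ (‖z‖ ^ 2 / (4 * s ^ 2) + n / (2 * s)) * heatKernel n s z := by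
        gcongr
        exact (abs_sub _ _).trans_eq (by rw [abs_of_nonneg, abs_of_nonneg] <;> positivity)
    _ = (‖z‖ ^ 2 / s / 2 + n) * (s⁻¹ / 2 * heatKernel n s z) := by field_simp; ring
    _ ≤ (n + 1) * (1 + ‖z‖ ^ 2 / s) * (s⁻¹ / 2 * heatKernel n s z) := by
        gcongr
        nlinarith [(Nat.cast_nonneg n : (0 : ℝ) ≤ n)]
    _ = _ := by ring

lemma hasDerivAt_d2Heat_time {s : ℝ} (hs : 0 < s) (z : EuclideanSpace ℝ (Fin n)) :
    HasDerivAt (fun t => d2Heat n i j t z)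
      (deriv (fun t => heatKernel n t z) s * hessianFactor i j s z +
        heatKernel n s z * deriv (fun t => hessianFactor i j t z) s) s := by
  simp only [d2Heat_eq_heatKernel_mul_hessianFactor]
  exact (hasDerivAt_heatKernel_time hs z).differentiableAt.hasDerivAt.fun_mul
    (hasDerivAt_hessianFactor_time i j hs.ne' z).differentiableAt.hasDerivAt

lemma abs_deriv_d2Heat_time_le {s : ℝ} (hs : 0 < s) (z : EuclideanSpace ℝ (Fin n)) :
    |deriv (fun t => d2Heat n i j t z) s| ≤
      (n + 1) * (s⁻¹ ^ 2 * ((1 + ‖z‖ ^ 2 / s) ^ 2 * heatKernel n s z)) := by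
  have kernel_pos := heatKernel_pos hs z
  have one_le : 1 ≤ 1 + ‖z‖ ^ 2 / s := le_add_of_nonneg_right (by positivity)
  have one_le_dim : (1 : ℝ) ≤ n + 1 := le_add_of_nonneg_left n.cast_nonneg
  rw [(hasDerivAt_d2Heat_time i j hs z).deriv]
  calc _ ≤ (n + 1) * (s⁻¹ * (1 + ‖z‖ ^ 2 / s) / 2 * heatKernel n s z) *
          (s⁻¹ * (1 + ‖z‖ ^ 2 / s) / 2) +
        heatKernel n s z * (s⁻¹ ^ 2 * (1 + ‖z‖ ^ 2 / s) / 2) := by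
        refine (abs_add_le _ _).trans ?_
        rw [abs_mul, abs_mul, abs_of_pos kernel_pos]
        gcongr
        exacts [abs_deriv_heatKernel_time_le hs z, abs_hessianFactor_le i j hs z,
          abs_deriv_hessianFactor_time_le i j hs z]
    _ = s⁻¹ ^ 2 * heatKernel n s z * ((n + 1) * (1 + ‖z‖ ^ 2 / s) ^ 2 / 4 +
        1 * ((1 + ‖z‖ ^ 2 / s) * 1) / 2) := by ring
    _ ≤ s⁻¹ ^ 2 * heatKernel n s z * ((n + 1) * (1 + ‖z‖ ^ 2 / s) ^ 2 / 2 +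
        (n + 1) * ((1 + ‖z‖ ^ 2 / s) * (1 + ‖z‖ ^ 2 / s)) / 2) := by
        gcongr; norm_num
    _ = _ := by ring

end SecondDerivative

section GaussianDomination

variable {n : ℕ}

/-- The constant with which `∂²_{x_i x_j}Γ(s, ·)` and its increments in space and time are dominated
by the heat kernel `Γ(4s, ·)`. The factor `n + 1` comes from the time derivative of `Γ`. -/
def hessianConst (n : ℕ) : ℝ := 2 * (n + 1) * (absorptionConst n 2 * 2 ^ ((n : ℝ) / 2))

lemma hessianConst_pos (n : ℕ) : 0 < hessianConst n := by
  have := absorptionConst_pos n two_pos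
  unfold hessianConst; positivity

lemma one_add_sq_mul_heatKernel_le_of_norm_sub_sq_le {s : ℝ} (hs : 0 < s)
    {w z : EuclideanSpace ℝ (Fin n)} (hwz : ‖w - z‖ ^ 2 ≤ s) :
    (1 + ‖w‖ ^ 2 / s) ^ 2 * heatKernel n s w ≤ hessianConst n * heatKernel n (4 * s) z := by
  have absorbed := one_add_rpow_mul_heatKernel_le two_pos hs w
  rw [Real.rpow_two] at absorbed
  have translated := heatKernel_le_exp_mul_heatKernel_two_mul (by positivity : 0 < 2 * s) w z
  rw [show 2 * (2 * s) = 4 * s by ring] at translated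
  have exp_le : Real.exp (‖w - z‖ ^ 2 / (4 * (2 * s))) ≤ 2 * (n + 1) := by
    calc Real.exp (‖w - z‖ ^ 2 / (4 * (2 * s))) ≤ Real.exp (Real.log 2) := by
          gcongr
          refine le_trans ?_ Real.log_two_gt_d9.le
          rw [div_le_iff₀ (by positivity)]
          linarith
      _ ≤ 2 * (n + 1) := by
          rw [Real.exp_log two_pos]
          linarith [n.cast_nonneg (α := ℝ)]
  have wide_pos := heatKernel_pos (by positivity : 0 < 4 * s) z
  have const_pos := absorptionConst_pos n two_pos
  calc _ ≤ absorptionConst n 2 * (2 ^ ((n : ℝ) / 2) * (2 * (n + 1)) * heatKernel n (4 * s) z) := by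
        refine absorbed.trans ?_
        gcongr
        exact translated.trans (by gcongr)
    _ = _ := by rw [hessianConst]; ring

lemma one_add_sq_mul_heatKernel_le_of_mem_Icc {s σ : ℝ} (hs : 0 < s)
    (hσ : σ ∈ Set.Icc s (2 * s)) (z : EuclideanSpace ℝ (Fin n)) :
    (n + 1) * ((1 + ‖z‖ ^ 2 / σ) ^ 2 * heatKernel n σ z) ≤
      hessianConst n * heatKernel n (4 * s) z := by
  have hσ_pos : 0 < σ := hs.trans_le hσ.1
  have absorbed := one_add_rpow_mul_heatKernel_le two_pos hσ_pos z
  rw [Real.rpow_two] at absorbed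
  have kernel_pos := heatKernel_pos hσ_pos z
  have wide_pos := heatKernel_pos (by positivity : 0 < 4 * s) z
  have const_pos := absorptionConst_pos n two_pos
  calc _ ≤ 2 * (n + 1) * (absorptionConst n 2 *
          ((4 * s / (2 * σ)) ^ ((n : ℝ) / 2) * heatKernel n (4 * s) z)) := by
        gcongr ?_ * ?_
        · linarith [n.cast_nonneg (α := ℝ)]
        · refine absorbed.trans ?_
          gcongr
          exact heatKernel_le_rpow_mul_heatKernel (by positivity) (by linarith [hσ.2]) z
    _ ≤ 2 * (n + 1) * (absorptionConst n 2 *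
          (2 ^ ((n : ℝ) / 2) * heatKernel n (4 * s) z)) := by
        gcongr
        rw [div_le_iff₀ (by positivity)]
        linarith [hσ.1]
    _ = _ := by rw [hessianConst]; ring

lemma abs_d2Heat_le (i j : Fin n) {s : ℝ} (hs : 0 < s) (z : EuclideanSpace ℝ (Fin n)) :
    |d2Heat n i j s z| ≤ hessianConst n * s⁻¹ * heatKernel n (4 * s) z := by
  have kernel_pos := heatKernel_pos hs z
  have one_le : 1 ≤ 1 + ‖z‖ ^ 2 / s := le_add_of_nonneg_right (by positivity)
  rw [d2Heat_eq_heatKernel_mul_hessianFactor, abs_mul, abs_of_pos kernel_pos]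
  calc _ ≤ heatKernel n s z * (s⁻¹ * (1 + ‖z‖ ^ 2 / s)) := by
        gcongr
        exact (abs_hessianFactor_le i j hs z).trans (half_le_self (by positivity))
    _ ≤ heatKernel n s z * (s⁻¹ * (1 + ‖z‖ ^ 2 / s) ^ 2) := by
        gcongr; exact le_self_pow₀ one_le two_ne_zero
    _ = s⁻¹ * ((1 + ‖z‖ ^ 2 / s) ^ 2 * heatKernel n s z) := by ring
    _ ≤ s⁻¹ * (hessianConst n * heatKernel n (4 * s) z) := by
        gcongr ?_ * ?_
        exact one_add_sq_mul_heatKernel_le_of_norm_sub_sq_le hs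
          (by rw [sub_self, norm_zero]; simpa using hs.le)
    _ = _ := by ring

lemma abs_d2Heat_add_sub_le (i j : Fin n) {s : ℝ} (hs : 0 < s) {h : EuclideanSpace ℝ (Fin n)}
    (hh : ‖h‖ ^ 2 ≤ s) (z : EuclideanSpace ℝ (Fin n)) :
    |d2Heat n i j s (z + h) - d2Heat n i j s z| ≤
      hessianConst n * (‖h‖ * s ^ (-(3 / 2) : ℝ)) * heatKernel n (4 * s) z := by
  have derivative_le (w) (hw : w ∈ Metric.closedBall z ‖h‖) : ‖fderiv ℝ (d2Heat n i j s) w‖ ≤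
      s ^ (-(3 / 2) : ℝ) * (hessianConst n * heatKernel n (4 * s) z) := by
    have near : ‖w - z‖ ^ 2 ≤ s := hh.trans' (by gcongr; exact mem_closedBall_iff_norm.1 hw)
    refine (norm_fderiv_d2Heat_le i j hs w).trans ?_
    gcongr ?_ * ?_
    exact one_add_sq_mul_heatKernel_le_of_norm_sub_sq_le hs near
  have mean_value := (convex_closedBall z ‖h‖).norm_image_sub_le_of_norm_fderiv_le
    (fun w _ => (hasFDerivAt_d2Heat i j s w).differentiableAt) derivative_le
    (Metric.mem_closedBall_self (norm_nonneg h)) (y := z + h) (by simp)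
  rw [add_sub_cancel_left] at mean_value
  exact mean_value.trans_eq (by ring)

lemma abs_d2Heat_add_time_sub_le (i j : Fin n) {s δ : ℝ} (hs : 0 < s) (hδ : δ ∈ Set.Icc 0 s)
    (z : EuclideanSpace ℝ (Fin n)) :
    |d2Heat n i j (s + δ) z - d2Heat n i j s z| ≤
      hessianConst n * (δ * s⁻¹ ^ 2) * heatKernel n (4 * s) z := by
  have derivative_le (σ) (hσ : σ ∈ Set.Icc s (s + δ)) : ‖deriv (fun t => d2Heat n i j t z) σ‖ ≤
      s⁻¹ ^ 2 * (hessianConst n * heatKernel n (4 * s) z) := by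
    have hσ_pos : 0 < σ := hs.trans_le hσ.1
    have kernel_pos := heatKernel_pos hσ_pos z
    calc _ ≤ (n + 1) * (σ⁻¹ ^ 2 * ((1 + ‖z‖ ^ 2 / σ) ^ 2 * heatKernel n σ z)) :=
          abs_deriv_d2Heat_time_le i j hσ_pos z
      _ = σ⁻¹ ^ 2 * ((n + 1) * ((1 + ‖z‖ ^ 2 / σ) ^ 2 * heatKernel n σ z)) := by ring
      _ ≤ _ := by
          gcongr ?_⁻¹ ^ 2 * ?_
          · exact hσ.1
          · exact one_add_sq_mul_heatKernel_le_of_mem_Icc hs ⟨hσ.1, by linarith [hσ.2, hδ.2]⟩ z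
  have le_end : s ≤ s + δ := le_add_of_nonneg_right hδ.1
  have mean_value := (convex_Icc s (s + δ)).norm_image_sub_le_of_norm_deriv_le
    (fun σ hσ => (hasDerivAt_d2Heat_time i j (hs.trans_le hσ.1) z).differentiableAt) derivative_le
    (Set.left_mem_Icc.2 le_end) (Set.right_mem_Icc.2 le_end)
  rw [add_sub_cancel_left, Real.norm_of_nonneg hδ.1] at mean_value
  exact mean_value.trans_eq (by ring)

lemma integrable_d2Heat (i j : Fin n) {s : ℝ} (hs : 0 < s) : Integrable (d2Heat n i j s) :=
  integrable_of_le_heatKernel (by positivity : 0 < 4 * s) (continuous_d2Heat i j s)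
    (abs_d2Heat_le i j hs)

lemma integrable_fderiv_heatKernel (j : Fin n) {s : ℝ} (hs : 0 < s) :
    Integrable fun z => fderiv ℝ (heatKernel n s) z (stdBasis n j) := by
  refine ((integrable_heatKernel_s13 n (by positivity : 0 < 2 * s)).const_mul
    ((2 * s)⁻¹ * (s ^ (1 / 2 : ℝ) * absorptionConst n (1 / 2)))).mono'
    (continuous_iff_continuousAt.2 fun z =>
      (hasFDerivAt_gradient_heatKernel j s z).continuousAt).aestronglyMeasurable
    (.of_forall fun z => ?_)
  have kernel_pos := heatKernel_pos hs z
  rw [fderiv_heatKernel_stdBasis, norm_mul, norm_neg, Real.norm_of_nonneg (by positivity)]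
  calc _ ≤ heatKernel n s z / (2 * s) * ‖z‖ := by gcongr; exact PiLp.norm_apply_le z j
    _ = (2 * s)⁻¹ * (‖z‖ ^ (1 : ℝ) * heatKernel n s z) := by rw [Real.rpow_one]; ring
    _ ≤ (2 * s)⁻¹ * (s ^ (1 / 2 : ℝ) * absorptionConst n (1 / 2) * heatKernel n (2 * s) z) := by
        gcongr ?_ * ?_; exact norm_rpow_mul_heatKernel_le one_pos hs z
    _ = _ := by ring

lemma integral_fderiv_apply_eq_zero {E F : Type*} [NormedAddCommGroup E] [NormedSpace ℝ E]
    [FiniteDimensional ℝ E] [MeasurableSpace E] [BorelSpace E] [NormedAddCommGroup F]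
    [NormedSpace ℝ F] {μ : Measure E} [μ.IsAddHaarMeasure] {g : E → F} {v : E}
    (hg : Differentiable ℝ g) (hg_int : Integrable g μ)
    (hg'_int : Integrable (fun z => fderiv ℝ g z v) μ) : ∫ z, fderiv ℝ g z v ∂μ = 0 := by
  have parts := integral_smul_fderiv_eq_neg_fderiv_smul_of_integrable (𝕜 := ℝ) (μ := μ)
    (f := fun _ => (1 : ℝ)) (g := g) (v := v) (by simp) (by simpa) (by simpa)
    (fun _ _ => differentiableAt_const _) fun z _ => hg z
  simpa using parts

lemma integral_d2Heat (i j : Fin n) {s : ℝ} (hs : 0 < s) : ∫ z, d2Heat n i j s z = 0 :=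
  integral_fderiv_apply_eq_zero
    (fun z => (hasFDerivAt_gradient_heatKernel j s z).differentiableAt)
    (integrable_fderiv_heatKernel j hs) (integrable_d2Heat i j hs)

end GaussianDomination

section CenteredConvolution

lemma holderWith_of_dist_le {X Y : Type*} [PseudoMetricSpace X] [PseudoMetricSpace Y]
    {K α : ℝ≥0} {f : X → Y} (hf : ∀ x y, dist (f x) (f y) ≤ K * dist x y ^ (α : ℝ)) :
    HolderWith K α f := fun x y => by
  rw [edist_nndist, edist_nndist, ← ENNReal.coe_rpow_of_nonneg _ α.coe_nonneg,
    ← ENNReal.coe_mul, ENNReal.coe_le_coe, ← NNReal.coe_le_coe]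
  exact hf x y

/-- The convolution of a kernel `k` with `φ - φ x`, evaluated at `x`. When `φ` is Hölder continuous,
subtracting `φ x` gains a positive power of the scale on which `k` is concentrated. -/
def centeredConv {E : Type*} [MeasureSpace E] [Sub E] (k φ : E → ℝ) (x : E) : ℝ :=
  ∫ y, k (x - y) * (φ y - φ x)

lemma centeredConv_sub {E : Type*} [MeasureSpace E] [Sub E] {k l φ : E → ℝ} {x : E}
    (hk : Integrable fun y => k (x - y) * (φ y - φ x))
    (hl : Integrable fun y => l (x - y) * (φ y - φ x)) :
    centeredConv (fun z => k z - l z) φ x = centeredConv k φ x - centeredConv l φ x := by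
  simp only [centeredConv, sub_mul]
  exact integral_sub hk hl

variable {n : ℕ} {k φ : EuclideanSpace ℝ (Fin n) → ℝ} {B r : ℝ} {K α : ℝ≥0}

lemma abs_mul_sub_le_of_le_heatKernel (hα : 0 < α) (hr : 0 < r)
    (hk : ∀ z, |k z| ≤ B * heatKernel n r z) (hφ : HolderWith K α φ)
    (x y : EuclideanSpace ℝ (Fin n)) :
    |k (x - y) * (φ y - φ x)| ≤
      B * (K * (r ^ (α / 2 : ℝ) * absorptionConst n (α / 2))) * heatKernel n (2 * r) (x - y) := by
  have kernel_pos := heatKernel_pos hr (x - y)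
  have hB : 0 ≤ B := nonneg_of_mul_nonneg_left ((abs_nonneg _).trans (hk (x - y))) kernel_pos
  have increment : |φ y - φ x| ≤ K * ‖x - y‖ ^ (α : ℝ) := by
    rw [← dist_eq_norm, dist_comm]
    exact hφ.dist_le y x
  rw [abs_mul]
  calc _ ≤ B * heatKernel n r (x - y) * (K * ‖x - y‖ ^ (α : ℝ)) := by gcongr; exact hk _
    _ = B * K * (‖x - y‖ ^ (α : ℝ) * heatKernel n r (x - y)) := by ring
    _ ≤ B * K * (r ^ (α / 2 : ℝ) * absorptionConst n (α / 2) * heatKernel n (2 * r) (x - y)) := by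
        gcongr ?_ * ?_; exact norm_rpow_mul_heatKernel_le hα hr _
    _ = _ := by ring

lemma abs_centeredConv_le (hα : 0 < α) (hr : 0 < r) (hk : ∀ z, |k z| ≤ B * heatKernel n r z)
    (hφ : HolderWith K α φ) (x : EuclideanSpace ℝ (Fin n)) :
    |centeredConv k φ x| ≤ B * (K * (r ^ (α / 2 : ℝ) * absorptionConst n (α / 2))) := by
  have h2r : 0 < 2 * r := by positivity
  have bound := norm_integral_le_of_norm_le (f := fun y => k (x - y) * (φ y - φ x))
    (((integrable_heatKernel_s13 n h2r).comp_sub_left x).const_mul _)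
    (.of_forall (abs_mul_sub_le_of_le_heatKernel hα hr hk hφ x))
  rwa [integral_const_mul, integral_sub_left_eq_self (heatKernel n (2 * r)),
    integral_heatKernel_s13 n h2r, mul_one] at bound

lemma integrable_mul_sub_of_le_heatKernel (hα : 0 < α) (hr : 0 < r) (hk_cont : Continuous k)
    (hk : ∀ z, |k z| ≤ B * heatKernel n r z) (hφ : HolderWith K α φ)
    (x : EuclideanSpace ℝ (Fin n)) (c : ℝ) : Integrable fun y => k (x - y) * (φ y - c) := by
  have hφ_cont := hφ.continuous hα
  have centered : Integrable fun y => k (x - y) * (φ y - φ x) :=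
    (((integrable_heatKernel_s13 n (by positivity : 0 < 2 * r)).comp_sub_left x).const_mul _).mono'
      (Continuous.aestronglyMeasurable (by fun_prop))
      (.of_forall (abs_mul_sub_le_of_le_heatKernel hα hr hk hφ x))
  refine (centered.add (((integrable_of_le_heatKernel hr hk_cont hk).comp_sub_left x).mul_const
    (φ x - c))).congr (.of_forall fun y => ?_)
  simp only [Pi.add_apply]
  ring

/-- A kernel of mean zero does not see the constant subtracted from `φ`, so the centre may stay at
`x` while the kernel is translated. -/
lemma centeredConv_add_eq_of_integral_eq_zero (hα : 0 < α) (hr : 0 < r) (hk_cont : Continuous k)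
    (hk : ∀ z, |k z| ≤ B * heatKernel n r z) (hk_zero : ∫ z, k z = 0) (hφ : HolderWith K α φ)
    (x h : EuclideanSpace ℝ (Fin n)) :
    centeredConv k φ (x + h) = centeredConv (fun z => k (z + h)) φ x := by
  have integrable := integrable_mul_sub_of_le_heatKernel hα hr hk_cont hk hφ (x + h)
  simp only [centeredConv, sub_add_eq_add_sub]
  rw [← sub_eq_zero, ← integral_sub (integrable _) (integrable _)]
  simp only [← mul_sub, sub_sub_sub_cancel_left]
  rw [integral_mul_const, integral_sub_left_eq_self k, hk_zero, zero_mul]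

end CenteredConvolution

section HessianConvolution

variable {n : ℕ} {φ : EuclideanSpace ℝ (Fin n) → ℝ} {s : ℝ} {K α : ℝ≥0}

/-- The constant in the estimates of `centeredConv` with kernel `∂²_{x_i x_j}Γ(s, ·)` and with the
increments of this kernel. -/
def hessianConvConst (n : ℕ) (α : ℝ) : ℝ :=
  hessianConst n * (4 ^ (α / 2) * absorptionConst n (α / 2))

lemma hessianConvConst_pos (n : ℕ) {α : ℝ} (hα : 0 < α) : 0 < hessianConvConst n α := by
  have := hessianConst_pos n
  have := absorptionConst_pos n (half_pos hα)
  unfold hessianConvConst; positivity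

lemma abs_centeredConv_le_of_le_heatKernel_four_mul {k : EuclideanSpace ℝ (Fin n) → ℝ} {a : ℝ}
    (hα : 0 < α) (hs : 0 < s) (hk : ∀ z, |k z| ≤ hessianConst n * a * heatKernel n (4 * s) z)
    (hφ : HolderWith K α φ) (x : EuclideanSpace ℝ (Fin n)) :
    |centeredConv k φ x| ≤ hessianConvConst n α * K * (a * s ^ (α / 2 : ℝ)) := by
  refine (abs_centeredConv_le hα (by positivity) hk hφ x).trans_eq ?_
  rw [Real.mul_rpow zero_le_four hs.le, hessianConvConst]
  ring

variable (i j : Fin n)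

lemma integrable_d2Heat_mul_sub (hα : 0 < α) (hs : 0 < s) (hφ : HolderWith K α φ)
    (x : EuclideanSpace ℝ (Fin n)) (c : ℝ) :
    Integrable fun y => d2Heat n i j s (x - y) * (φ y - c) :=
  integrable_mul_sub_of_le_heatKernel hα (by positivity : 0 < 4 * s) (continuous_d2Heat i j s)
    (abs_d2Heat_le i j hs) hφ x c

lemma abs_centeredConv_d2Heat_le (hα : 0 < α) (hs : 0 < s) (hφ : HolderWith K α φ)
    (x : EuclideanSpace ℝ (Fin n)) :
    |centeredConv (d2Heat n i j s) φ x| ≤ hessianConvConst n α * K * s ^ (α / 2 - 1 : ℝ) := by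
  refine (abs_centeredConv_le_of_le_heatKernel_four_mul hα hs
    (abs_d2Heat_le i j hs) hφ x).trans_eq ?_
  rw [Real.rpow_sub_one hs.ne']
  ring

lemma abs_centeredConv_d2Heat_sub_le (hα : 0 < α) (hs : 0 < s) (hφ : HolderWith K α φ)
    {x x' : EuclideanSpace ℝ (Fin n)} (hx : ‖x' - x‖ ^ 2 ≤ s) :
    |centeredConv (d2Heat n i j s) φ x' - centeredConv (d2Heat n i j s) φ x| ≤
      hessianConvConst n α * K * (‖x' - x‖ * s ^ (α / 2 - 3 / 2 : ℝ)) := by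
  obtain ⟨h, rfl⟩ : ∃ h, x' = x + h := ⟨x' - x, (add_sub_cancel x x').symm⟩
  rw [add_sub_cancel_left] at hx ⊢
  have translated : Integrable fun y => d2Heat n i j s (x - y + h) * (φ y - φ x) := by
    simpa only [sub_add_eq_add_sub] using integrable_d2Heat_mul_sub i j hα hs hφ (x + h) (φ x)
  have difference : centeredConv (d2Heat n i j s) φ (x + h) - centeredConv (d2Heat n i j s) φ x =
      centeredConv (fun z => d2Heat n i j s (z + h) - d2Heat n i j s z) φ x := by
    rw [centeredConv_add_eq_of_integral_eq_zero hα (by positivity : 0 < 4 * s)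
      (continuous_d2Heat i j s) (abs_d2Heat_le i j hs) (integral_d2Heat i j hs) hφ]
    exact (centeredConv_sub (k := fun z => d2Heat n i j s (z + h)) translated
      (integrable_d2Heat_mul_sub i j hα hs hφ x (φ x))).symm
  rw [difference]
  refine (abs_centeredConv_le_of_le_heatKernel_four_mul hα hs
    (abs_d2Heat_add_sub_le i j hs hx) hφ x).trans_eq ?_
  rw [mul_assoc ‖h‖, ← Real.rpow_add hs, neg_add_eq_sub]

lemma abs_centeredConv_d2Heat_add_time_sub_le (hα : 0 < α) (hs : 0 < s) (hφ : HolderWith K α φ)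
    {δ : ℝ} (hδ : δ ∈ Set.Icc 0 s) (x : EuclideanSpace ℝ (Fin n)) :
    |centeredConv (d2Heat n i j (s + δ)) φ x - centeredConv (d2Heat n i j s) φ x| ≤
      hessianConvConst n α * K * (δ * s ^ (α / 2 - 2 : ℝ)) := by
  rw [← centeredConv_sub
    (integrable_d2Heat_mul_sub i j hα (add_pos_of_pos_of_nonneg hs hδ.1) hφ x (φ x))
    (integrable_d2Heat_mul_sub i j hα hs hφ x (φ x))]
  refine (abs_centeredConv_le_of_le_heatKernel_four_mul hα hs
    (abs_d2Heat_add_time_sub_le i j hs hδ) hφ x).trans_eq ?_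
  rw [Real.rpow_sub hs, Real.rpow_two]
  ring

end HessianConvolution

section TimeSlice

variable {n : ℕ} {f : ℝ → EuclideanSpace ℝ (Fin n) → Matrix (Fin n) (Fin n) ℝ}
  {t t' τ : ℝ} {K α : ℝ≥0}

lemma abs_sum_sum_le_sq_mul {a : Fin n → Fin n → ℝ} {b : ℝ} (h : ∀ i j, |a i j| ≤ b) :
    |∑ i, ∑ j, a i j| ≤ n ^ 2 * b :=
  calc _ ≤ ∑ i, ∑ j, |a i j| :=
        (Finset.abs_sum_le_sum_abs _ _).trans
          (Finset.sum_le_sum fun _ _ => Finset.abs_sum_le_sum_abs _ _)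
    _ ≤ ∑ _i : Fin n, ∑ _j : Fin n, b :=
        Finset.sum_le_sum fun i _ => Finset.sum_le_sum fun j _ => h i j
    _ = n ^ 2 * b := by
        simp only [Finset.sum_const, Finset.card_univ, Fintype.card_fin, nsmul_eq_mul]
        ring

/-- The constant in the estimates of a time slice `∫ y, d2Integrand n f t x τ y` and of its
increments; the factor `n ^ 2` counts the entries of `f`. -/
def sliceConst (n : ℕ) (α : ℝ) : ℝ := n ^ 2 * hessianConvConst n α

lemma sliceConst_nonneg (n : ℕ) {α : ℝ} (hα : 0 < α) : 0 ≤ sliceConst n α :=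
  mul_nonneg (by positivity) (hessianConvConst_pos n hα).le

lemma integral_d2Integrand (hα : 0 < α) (hτ : τ < t)
    (hf : ∀ i j, HolderWith K α fun y => f τ y i j) (x : EuclideanSpace ℝ (Fin n)) :
    ∫ y, d2Integrand n f t x τ y =
      ∑ i, ∑ j, centeredConv (d2Heat n i j (t - τ)) (fun y => f τ y i j) x := by
  have integrable (i j) := integrable_d2Heat_mul_sub i j hα (sub_pos.2 hτ) (hf i j) x (f τ x i j)
  simp only [d2Integrand, centeredConv]
  rw [integral_finsetSum _ fun i _ => integrable_finsetSum _ fun j _ => integrable i j]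
  exact Finset.sum_congr rfl fun i _ => integral_finsetSum _ fun j _ => integrable i j

lemma abs_integral_d2Integrand_le (hα : 0 < α) (hτ : τ < t)
    (hf : ∀ i j, HolderWith K α fun y => f τ y i j) (x : EuclideanSpace ℝ (Fin n)) :
    |∫ y, d2Integrand n f t x τ y| ≤ sliceConst n α * K * (t - τ) ^ (α / 2 - 1 : ℝ) := by
  rw [integral_d2Integrand hα hτ hf]
  refine (abs_sum_sum_le_sq_mul fun i j =>
    abs_centeredConv_d2Heat_le i j hα (sub_pos.2 hτ) (hf i j) x).trans_eq ?_
  rw [sliceConst]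
  ring

lemma abs_integral_d2Integrand_space_sub_le (hα : 0 < α) (hτ : τ < t)
    (hf : ∀ i j, HolderWith K α fun y => f τ y i j) {x x' : EuclideanSpace ℝ (Fin n)}
    (hx : ‖x' - x‖ ^ 2 ≤ t - τ) :
    |(∫ y, d2Integrand n f t x' τ y) - ∫ y, d2Integrand n f t x τ y| ≤
      sliceConst n α * K * (‖x' - x‖ * (t - τ) ^ (α / 2 - 3 / 2 : ℝ)) := by
  rw [integral_d2Integrand hα hτ hf, integral_d2Integrand hα hτ hf]
  simp only [← Finset.sum_sub_distrib]
  refine (abs_sum_sum_le_sq_mul fun i j =>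
    abs_centeredConv_d2Heat_sub_le i j hα (sub_pos.2 hτ) (hf i j) hx).trans_eq ?_
  rw [sliceConst]
  ring

lemma abs_integral_d2Integrand_time_sub_le (hα : 0 < α) (hτ : τ < t)
    (hf : ∀ i j, HolderWith K α fun y => f τ y i j) (ht' : t' - t ∈ Set.Icc 0 (t - τ))
    (x : EuclideanSpace ℝ (Fin n)) :
    |(∫ y, d2Integrand n f t' x τ y) - ∫ y, d2Integrand n f t x τ y| ≤
      sliceConst n α * K * ((t' - t) * (t - τ) ^ (α / 2 - 2 : ℝ)) := by
  have hτ' : τ < t' := hτ.trans_le (sub_nonneg.1 ht'.1)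
  rw [integral_d2Integrand hα hτ' hf, integral_d2Integrand hα hτ hf,
    ← sub_add_sub_cancel' t τ t']
  simp only [← Finset.sum_sub_distrib]
  refine (abs_sum_sum_le_sq_mul fun i j =>
    abs_centeredConv_d2Heat_add_time_sub_le i j hα (sub_pos.2 hτ) (hf i j) ht' x).trans_eq ?_
  rw [sliceConst]
  ring

end TimeSlice

section SingularTimeIntegral

variable {F : ℝ → ℝ} {A a t β p ρ : ℝ}

lemma abs_integral_le_of_singular_bound (hβ : 0 < β) (hat : a ≤ t)
    (hF : ∀ τ ∈ Set.Ioo a t, |F τ| ≤ A * (t - τ) ^ (β - 1)) :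
    |∫ τ in a..t, F τ| ≤ A * (β⁻¹ * (t - a) ^ β) := by
  have majorant_integrable : IntervalIntegrable (fun τ => (t - τ) ^ (β - 1)) volume a t := by
    simpa only [sub_sub_cancel, sub_zero] using
      (intervalIntegral.intervalIntegrable_rpow' (a := t - a) (b := 0) (r := β - 1)
        (by linarith)).comp_sub_left t
  have majorant_integral : ∫ τ in a..t, (t - τ) ^ (β - 1) = β⁻¹ * (t - a) ^ β := by
    rw [intervalIntegral.integral_comp_sub_left (fun u => u ^ (β - 1)) t, sub_self,
      integral_rpow (.inl (by linarith)), sub_add_cancel, Real.zero_rpow hβ.ne', sub_zero,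
      div_eq_inv_mul]
  have hF_ae : ∀ᵐ τ, τ ∈ Set.Ioc a t → ‖F τ‖ ≤ A * (t - τ) ^ (β - 1) := by
    filter_upwards [volume.ae_ne t] with τ hτ hmem
    exact hF τ ⟨hmem.1, hmem.2.lt_of_ne hτ⟩
  have bound := intervalIntegral.norm_integral_le_of_norm_le hat hF_ae
    (majorant_integrable.const_mul A)
  rwa [intervalIntegral.integral_const_mul, majorant_integral] at bound

lemma abs_integral_le_of_tail_bound (hA : 0 ≤ A) (hp : β < p) (hρ : 0 < ρ) (hρt : ρ ≤ t)
    (hF : ∀ τ ∈ Set.Ioc 0 (t - ρ), |F τ| ≤ A * (ρ ^ p * (t - τ) ^ (β - 1 - p))) :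
    |∫ τ in 0..t - ρ, F τ| ≤ A * ((p - β)⁻¹ * ρ ^ β) := by
  have := sub_pos.2 hp
  have zero_notMem : (0 : ℝ) ∉ Set.uIcc ρ t := Set.notMem_uIcc_of_lt hρ (hρ.trans_le hρt)
  have majorant_integrable :
      IntervalIntegrable (fun τ => (t - τ) ^ (β - 1 - p)) volume 0 (t - ρ) := by
    simpa only [sub_self] using
      (intervalIntegral.intervalIntegrable_rpow (μ := volume) (a := t) (b := ρ)
        (r := β - 1 - p) (.inr (by rwa [Set.uIcc_comm]))).comp_sub_left t
  have majorant_integral :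
      ∫ τ in 0..t - ρ, (t - τ) ^ (β - 1 - p) = (p - β)⁻¹ * (ρ ^ (β - p) - t ^ (β - p)) := by
    rw [intervalIntegral.integral_comp_sub_left (fun u => u ^ (β - 1 - p)) t, sub_sub_cancel,
      sub_zero, integral_rpow (.inr ⟨by linarith, zero_notMem⟩),
      show β - 1 - p + 1 = β - p by ring, ← neg_sub p β, div_neg, ← neg_div, neg_sub,
      div_eq_inv_mul]
  have bound := intervalIntegral.norm_integral_le_of_norm_le (f := F) (sub_nonneg.2 hρt)
    (.of_forall hF) ((majorant_integrable.const_mul (ρ ^ p)).const_mul A)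
  rw [intervalIntegral.integral_const_mul, intervalIntegral.integral_const_mul,
    majorant_integral] at bound
  calc _ ≤ A * (ρ ^ p * ((p - β)⁻¹ * (ρ ^ (β - p) - t ^ (β - p)))) := bound
    _ ≤ A * (ρ ^ p * ((p - β)⁻¹ * ρ ^ (β - p))) := by
        gcongr
        exact sub_le_self _ (Real.rpow_nonneg (hρ.le.trans hρt) _)
    _ = A * ((p - β)⁻¹ * ρ ^ β) := by
        rw [mul_left_comm (ρ ^ p), ← Real.rpow_add hρ, add_sub_cancel]

lemma abs_integral_le_of_singular_of_tail (hA : 0 ≤ A) (hβ : 0 < β) (hp : β < p) (hρ : 0 < ρ)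
    (ht : 0 ≤ t) (hF_int : IntervalIntegrable F volume 0 t)
    (hF : ∀ τ ∈ Set.Ioo 0 t, |F τ| ≤ A * (t - τ) ^ (β - 1))
    (hF_tail : ∀ τ ∈ Set.Ioc 0 (t - ρ), |F τ| ≤ A * (ρ ^ p * (t - τ) ^ (β - 1 - p))) :
    |∫ τ in 0..t, F τ| ≤ A * ((β⁻¹ + (p - β)⁻¹) * ρ ^ β) := by
  have hpβ : 0 < p - β := sub_pos.2 hp
  rcases le_total t ρ with htρ | hρt
  · refine (abs_integral_le_of_singular_bound hβ ht hF).trans ?_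
    rw [sub_zero]
    gcongr
    exact le_add_of_nonneg_right (inv_nonneg.2 hpβ.le)
  · have hmem : t - ρ ∈ Set.uIcc 0 t := by
      rw [Set.uIcc_of_le ht]
      exact ⟨sub_nonneg.2 hρt, sub_le_self t hρ.le⟩
    have tail := abs_integral_le_of_tail_bound hA hp hρ hρt hF_tail
    have singular : |∫ τ in t - ρ..t, F τ| ≤ A * (β⁻¹ * ρ ^ β) := by
      simpa only [sub_sub_cancel] using abs_integral_le_of_singular_bound hβ
        (sub_le_self t hρ.le) fun τ hτ => hF τ ⟨(sub_nonneg.2 hρt).trans_lt hτ.1, hτ.2⟩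
    rw [← intervalIntegral.integral_add_adjacent_intervals
      (hF_int.mono_set (Set.uIcc_subset_uIcc_left hmem))
      (hF_int.mono_set (Set.uIcc_subset_uIcc_right hmem))]
    refine (abs_add_le _ _).trans ((add_le_add tail singular).trans_eq ?_)
    ring

end SingularTimeIntegral

section DuhamelTerm

/-- The Duhamel term `v(t,x)` of the heat equation with source `∑ ∂²_{x_i x_j} f_{ij}`, in the form
regularised by subtracting `f_{ij}(τ,x)`. -/
def duhamelTerm (n : ℕ) (f : ℝ → EuclideanSpace ℝ (Fin n) → Matrix (Fin n) (Fin n) ℝ)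
    (t : ℝ) (x : EuclideanSpace ℝ (Fin n)) : ℝ :=
  ∫ τ in Set.Ioc 0 t, ∫ y, d2Integrand n f t x τ y

variable {n : ℕ} {f : ℝ → EuclideanSpace ℝ (Fin n) → Matrix (Fin n) (Fin n) ℝ}
  {t t' : ℝ} {K α : ℝ≥0}

lemma duhamelTerm_eq_intervalIntegral (ht : 0 ≤ t) (x : EuclideanSpace ℝ (Fin n)) :
    duhamelTerm n f t x = ∫ τ in 0..t, ∫ y, d2Integrand n f t x τ y :=
  (intervalIntegral.integral_of_le ht).symm

theorem abs_duhamelTerm_le (hα : 0 < α) (ht : 0 ≤ t)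
    (hf : ∀ τ ∈ Set.Ioo 0 t, ∀ i j, HolderWith K α fun y => f τ y i j)
    (x : EuclideanSpace ℝ (Fin n)) :
    |duhamelTerm n f t x| ≤ sliceConst n α * (α / 2 : ℝ)⁻¹ * K * t ^ (α / 2 : ℝ) := by
  rw [duhamelTerm_eq_intervalIntegral ht]
  refine (abs_integral_le_of_singular_bound (half_pos (NNReal.coe_pos.2 hα)) ht fun τ hτ =>
    abs_integral_d2Integrand_le hα hτ.2 (hf τ hτ) x).trans_eq ?_
  rw [sub_zero]
  ring

theorem abs_duhamelTerm_space_sub_le (hα : α ∈ Set.Ioo 0 1) (ht : 0 ≤ t)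
    (hf : ∀ τ ∈ Set.Ioo 0 t, ∀ i j, HolderWith K α fun y => f τ y i j)
    {x x' : EuclideanSpace ℝ (Fin n)}
    (hx_int : IntegrableOn (fun τ => ∫ y, d2Integrand n f t x τ y) (Set.Ioc 0 t))
    (hx'_int : IntegrableOn (fun τ => ∫ y, d2Integrand n f t x' τ y) (Set.Ioc 0 t)) :
    |duhamelTerm n f t x' - duhamelTerm n f t x| ≤
      sliceConst n α * (2 * ((α / 2 : ℝ)⁻¹ + (1 / 2 - α / 2 : ℝ)⁻¹)) * K *
        ‖x' - x‖ ^ (α : ℝ) := by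
  have hα_lt : (α : ℝ) < 1 := hα.2
  have hM := sliceConst_nonneg n (NNReal.coe_pos.2 hα.1)
  rcases eq_or_ne x' x with rfl | hne
  · simp [Real.zero_rpow (NNReal.coe_pos.2 hα.1).ne']
  have hρ : 0 < ‖x' - x‖ := norm_sub_pos_iff.2 hne
  rw [← intervalIntegrable_iff_integrableOn_Ioc_of_le ht] at hx_int hx'_int
  rw [duhamelTerm_eq_intervalIntegral ht, duhamelTerm_eq_intervalIntegral ht,
    ← intervalIntegral.integral_sub hx'_int hx_int]
  refine (abs_integral_le_of_singular_of_tail (A := 2 * (sliceConst n α * K)) (β := α / 2)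
    (p := 1 / 2) (ρ := ‖x' - x‖ ^ 2) (by positivity) (half_pos (NNReal.coe_pos.2 hα.1))
    (by linarith) (by positivity) ht (hx'_int.sub hx_int) (fun τ hτ => ?singular)
    fun τ hτ => ?tail).trans_eq ?constant
  case singular =>
    have at_point (z) := abs_integral_d2Integrand_le hα.1 hτ.2 (hf τ hτ) z
    linarith [abs_sub (∫ y, d2Integrand n f t x' τ y) (∫ y, d2Integrand n f t x τ y),
      at_point x, at_point x']
  case tail =>
    have hsq : 0 < ‖x' - x‖ ^ 2 := by positivity
    have hτt : τ < t := by linarith [hτ.2]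
    refine (abs_integral_d2Integrand_space_sub_le hα.1 hτt (hf τ ⟨hτ.1, hτt⟩)
      (le_sub_comm.1 hτ.2)).trans ?_
    rw [← Real.sqrt_eq_rpow, Real.sqrt_sq hρ.le,
      show (α / 2 - 1 - 1 / 2 : ℝ) = α / 2 - 3 / 2 by ring]
    have := sub_pos.2 hτt
    gcongr ?_ * _
    exact le_mul_of_one_le_left (by positivity) one_le_two
  case constant =>
    rw [← Real.rpow_natCast_mul hρ.le, Nat.cast_two, mul_div_cancel₀ _ two_ne_zero]
    ring

lemma abs_integral_time_sub_integral_d2Integrand_le (hα : α ∈ Set.Ioo 0 2) (ht : 0 ≤ t)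
    (htt' : t < t') (hf : ∀ τ ∈ Set.Ioo 0 t, ∀ i j, HolderWith K α fun y => f τ y i j)
    {x : EuclideanSpace ℝ (Fin n)}
    (ht_int : IntervalIntegrable (fun τ => ∫ y, d2Integrand n f t x τ y) volume 0 t)
    (ht'_int : IntervalIntegrable (fun τ => ∫ y, d2Integrand n f t' x τ y) volume 0 t) :
    |∫ τ in 0..t, ((∫ y, d2Integrand n f t' x τ y) - ∫ y, d2Integrand n f t x τ y)| ≤
      2 * (sliceConst n α * K) *
        (((α / 2 : ℝ)⁻¹ + (1 - α / 2 : ℝ)⁻¹) * (t' - t) ^ (α / 2 : ℝ)) := by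
  have hα_lt : (α : ℝ) < 2 := hα.2
  have hM := sliceConst_nonneg n (NNReal.coe_pos.2 hα.1)
  refine abs_integral_le_of_singular_of_tail (by positivity) (half_pos (NNReal.coe_pos.2 hα.1))
    (by linarith) (sub_pos.2 htt') ht (ht'_int.sub ht_int) (fun τ hτ => ?singular)
    fun τ hτ => ?tail
  case singular =>
    have at_time {s : ℝ} (hs : τ < s) := abs_integral_d2Integrand_le hα.1 hs (hf τ hτ) x
    have decay : sliceConst n α * K * (t' - τ) ^ (α / 2 - 1 : ℝ) ≤
        sliceConst n α * K * (t - τ) ^ (α / 2 - 1 : ℝ) := mul_le_mul_of_nonneg_left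
        (Real.rpow_le_rpow_of_nonpos (sub_pos.2 hτ.2) (by linarith) (by linarith)) (by positivity)
    linarith [abs_sub (∫ y, d2Integrand n f t' x τ y) (∫ y, d2Integrand n f t x τ y),
      at_time hτ.2, at_time (hτ.2.trans htt')]
  case tail =>
    have hτt : τ < t := by linarith [hτ.2]
    refine (abs_integral_d2Integrand_time_sub_le hα.1 hτt (hf τ ⟨hτ.1, hτt⟩)
      ⟨(sub_pos.2 htt').le, le_sub_comm.1 hτ.2⟩ x).trans ?_
    rw [Real.rpow_one, show (α / 2 - 1 - 1 : ℝ) = α / 2 - 2 by ring]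
    have := sub_pos.2 hτt
    have := sub_pos.2 htt'
    gcongr ?_ * _
    exact le_mul_of_one_le_left (by positivity) one_le_two

theorem abs_duhamelTerm_time_sub_le (hα : α ∈ Set.Ioo 0 2) (ht : 0 ≤ t) (htt' : t < t')
    (hf : ∀ τ ∈ Set.Ioo 0 t', ∀ i j, HolderWith K α fun y => f τ y i j)
    {x : EuclideanSpace ℝ (Fin n)}
    (ht_int : IntegrableOn (fun τ => ∫ y, d2Integrand n f t x τ y) (Set.Ioc 0 t))
    (ht'_int : IntegrableOn (fun τ => ∫ y, d2Integrand n f t' x τ y) (Set.Ioc 0 t')) :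
    |duhamelTerm n f t' x - duhamelTerm n f t x| ≤
      sliceConst n α * (3 * (α / 2 : ℝ)⁻¹ + 2 * (1 - α / 2 : ℝ)⁻¹) * K *
        (t' - t) ^ (α / 2 : ℝ) := by
  have ht'0 : 0 ≤ t' := ht.trans htt'.le
  have hmem : t ∈ Set.uIcc 0 t' := Set.mem_uIcc_of_le ht htt'.le
  rw [← intervalIntegrable_iff_integrableOn_Ioc_of_le ht] at ht_int
  rw [← intervalIntegrable_iff_integrableOn_Ioc_of_le ht'0] at ht'_int
  have before := ht'_int.mono_set (Set.uIcc_subset_uIcc_left hmem)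
  have after := ht'_int.mono_set (Set.uIcc_subset_uIcc_right hmem)
  have common_past := abs_integral_time_sub_integral_d2Integrand_le hα ht htt'
    (fun τ hτ => hf τ ⟨hτ.1, hτ.2.trans htt'⟩) ht_int before
  have new_interval : |∫ τ in t..t', ∫ y, d2Integrand n f t' x τ y| ≤
      sliceConst n α * K * ((α / 2 : ℝ)⁻¹ * (t' - t) ^ (α / 2 : ℝ)) :=
    abs_integral_le_of_singular_bound (half_pos (NNReal.coe_pos.2 hα.1)) htt'.le fun τ hτ =>
      abs_integral_d2Integrand_le hα.1 hτ.2 (hf τ ⟨ht.trans_lt hτ.1, hτ.2⟩) x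
  rw [duhamelTerm_eq_intervalIntegral ht'0, duhamelTerm_eq_intervalIntegral ht,
    ← intervalIntegral.integral_add_adjacent_intervals before after, add_sub_right_comm,
    ← intervalIntegral.integral_sub before ht_int]
  refine (abs_add_le _ _).trans ((add_le_add common_past new_interval).trans_eq ?_)
  ring

end DuhamelTerm

theorem statement13_general (n : ℕ) (α : ℝ) (hα : α ∈ Set.Ioo (0 : ℝ) 1) :
    ∃ C : ℝ, 0 < C ∧
      ∀ (T : ℝ) (f : ℝ → EuclideanSpace ℝ (Fin n) → Matrix (Fin n) (Fin n) ℝ) (K : ℝ), 0 ≤ K →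
        (∀ τ ∈ Set.Ioo (0 : ℝ) T, ∀ y y' : EuclideanSpace ℝ (Fin n), ∀ i j : Fin n,
          |f τ y i j - f τ y' i j| ≤ K * ‖y - y'‖ ^ α) →
        (∀ t ∈ Set.Icc 0 T, ∀ x,
          IntegrableOn (fun τ => ∫ y, d2Integrand n f t x τ y) (Set.Ioc 0 t)) →
        (∀ t : ℝ, 0 < t → t ≤ T → ∀ x x',
          |duhamelTerm n f t x' - duhamelTerm n f t x| ≤ C * K * ‖x' - x‖ ^ α) ∧
        (∀ t : ℝ, 0 < t → t ≤ T → ∀ x, |duhamelTerm n f t x| ≤ C * K * t ^ (α / 2)) ∧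
        (∀ t t' : ℝ, 0 ≤ t → t < t' → t' ≤ T → ∀ x,
          |duhamelTerm n f t' x - duhamelTerm n f t x| ≤ C * K * (t' - t) ^ (α / 2)) := by
  lift α to ℝ≥0 using hα.1.le
  obtain ⟨hα0, hα1⟩ : 0 < α ∧ α < 1 := ⟨NNReal.coe_pos.1 hα.1, NNReal.coe_lt_one.1 hα.2⟩
  obtain ⟨C, hC, hC_sup, hC_space, hC_time⟩ : ∃ C : ℝ, 0 < C ∧
      sliceConst n α * (α / 2 : ℝ)⁻¹ ≤ C ∧
      sliceConst n α * (2 * ((α / 2 : ℝ)⁻¹ + (1 / 2 - α / 2 : ℝ)⁻¹)) ≤ C ∧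
      sliceConst n α * (3 * (α / 2 : ℝ)⁻¹ + 2 * (1 - α / 2 : ℝ)⁻¹) ≤ C :=
    ((Filter.eventually_gt_atTop 0).and ((Filter.eventually_ge_atTop _).and
      ((Filter.eventually_ge_atTop _).and (Filter.eventually_ge_atTop _)))).exists
  refine ⟨C, hC, fun T f K hK hf h_int => ?_⟩
  lift K to ℝ≥0 using hK
  have hf_holder {τ} (hτ : τ ∈ Set.Ioo 0 T) (i j) : HolderWith K α fun y => f τ y i j :=
    holderWith_of_dist_le fun y y' => by
      simpa only [dist_eq_norm, Real.norm_eq_abs] using hf τ hτ y y' i j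
  have hf_before {t} (ht : t ≤ T) (τ) (hτ : τ ∈ Set.Ioo 0 t) :=
    hf_holder (Set.Ioo_subset_Ioo_right ht hτ)
  refine ⟨fun t ht htT x x' => ?_, fun t ht htT x => ?_, fun t t' ht htt' ht'T x => ?_⟩
  · refine (abs_duhamelTerm_space_sub_le ⟨hα0, hα1⟩ ht.le (hf_before htT)
      (h_int t ⟨ht.le, htT⟩ x) (h_int t ⟨ht.le, htT⟩ x')).trans ?_
    gcongr
  · refine (abs_duhamelTerm_le hα0 ht.le (hf_before htT) x).trans ?_
    gcongr
  · refine (abs_duhamelTerm_time_sub_le ⟨hα0, hα1.trans one_lt_two⟩ ht htt' (hf_before ht'T)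
      (h_int t ⟨ht, htt'.le.trans ht'T⟩ x)
      (h_int t' ⟨ht.trans htt'.le, ht'T⟩ x)).trans ?_
    have := sub_pos.2 htt'
    gcongr

/-- **Estimates for the Duhamel term with a second-derivative source `f`**
(the `f`-part of the heat-equation Schauder estimates): sup, spatial Hölder
and time Hölder bounds (i)–(iii) with constant `C·K`, `K` the spatial Hölder
constant of `f`. -/
theorem statement13 (n : ℕ) (hn : 1 ≤ n) (α : ℝ) (hα : α ∈ Set.Ioo (0 : ℝ) 1) :
    ∃ C : ℝ, 0 < C ∧
      ∀ T : ℝ, 0 < T →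
      ∀ f : ℝ → EuclideanSpace ℝ (Fin n) → Matrix (Fin n) (Fin n) ℝ,
        ContinuousOn (fun q : ℝ × EuclideanSpace ℝ (Fin n) => f q.1 q.2)
          (Set.Icc 0 T ×ˢ Set.univ) →
      ∀ K : ℝ, 0 ≤ K →
        (∀ τ ∈ Set.Icc (0 : ℝ) T, ∀ y y' : EuclideanSpace ℝ (Fin n), ∀ i j : Fin n,
          |f τ y i j - f τ y' i j| ≤ K * ‖y - y'‖ ^ α) →
      -- absolute convergence of the defining integrals
      (∀ t x, ∀ τ ∈ Set.Ioc (0 : ℝ) t, Integrable (fun y => d2Integrand n f t x τ y)) →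
      (∀ t x, IntegrableOn (fun τ => ∫ y, d2Integrand n f t x τ y) (Set.Ioc 0 t)) →
      ∀ v : ℝ → EuclideanSpace ℝ (Fin n) → ℝ,
        (∀ t x, v t x = ∫ τ in Set.Ioc (0 : ℝ) t, ∫ y, d2Integrand n f t x τ y) →
        (∀ t : ℝ, 0 < t → t ≤ T → ∀ x x',
          |v t x' - v t x| ≤ C * K * ‖x' - x‖ ^ α) ∧
        (∀ t : ℝ, 0 < t → t ≤ T → ∀ x, |v t x| ≤ C * K * t ^ (α / 2)) ∧
        (∀ t t' : ℝ, 0 ≤ t → t < t' → t' ≤ T → ∀ x,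
          |v t' x - v t x| ≤ C * K * (t' - t) ^ (α / 2)) := by
  obtain ⟨C, hC, bounds⟩ := statement13_general n α hα
  refine ⟨C, hC, fun T _ f _ K hK hf _ h_int v hv => ?_⟩
  obtain rfl : v = duhamelTerm n f := funext₂ hv
  exact bounds T f K hK (fun τ hτ => hf τ (Set.Ioo_subset_Icc_self hτ)) fun t _ => h_int t
end
end

section
/- Let n ≥ 1 be an integer, m ∈ (0,1) with m > (n−2)/n, p := 2/(1−m) − n, and 0 < T ≤ ∞. Let ρ : (0,T)×ℝⁿ → (0,∞) be continuously differentiable in τ and twice continuously differentiable in y, satisfying ∂_τ ρ = (1/m)Δ(ρᵐ) pointwise. Assume the decay bounds: for every compact J ⊂ (0,T) there is C_J with ρ(τ,y) ≤ C_J (1+|y|)^{−(n+p)} and |∇_y ρ(τ,y)| ≤ C_J (1+|y|)^{−(n+p+1)} for all τ ∈ J and y ∈ ℝⁿ. Let h : ℝⁿ → ℝ be a harmonic polynomial (Δh = 0) of degree ℓ with ℓ < p, and assume that for every compact J ⊂ (0,T) there is an integrable g_J : ℝⁿ → [0,∞) with |∂_τ ρ(τ,y)·h(y)| ≤ g_J(y)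 for all τ ∈ J and y ∈ ℝⁿ. Then the moment τ ↦ ∫_{ℝⁿ} ρ(τ,y)·h(y) dy is constant on (0,T). -/
open MeasureTheory Filter
open scoped BigOperators ENNReal Topology

noncomputable section

/-- The Laplacian (sum of second partial derivatives) of `f : ℝⁿ → ℝ`. -/
def lap (n : ℕ) (f : EuclideanSpace ℝ (Fin n) → ℝ) (x : EuclideanSpace ℝ (Fin n)) : ℝ :=
  ∑ i : Fin n, fderiv ℝ (fun y => fderiv ℝ f y (stdBasis n i)) x (stdBasis n i)

/-- `x · ∇f x`. -/
def gradDot (n : ℕ) (f : EuclideanSpace ℝ (Fin n) → ℝ) (x : EuclideanSpace ℝ (Fin n)) : ℝ :=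
  ∑ i : Fin n, x i * fderiv ℝ f x (stdBasis n i)

/-- The moment parameter `p = 2/(1-m) - n`. -/
def pPar (n : ℕ) (m : ℝ) : ℝ := 2 / (1 - m) - n

/-- The scaling exponent `β = (1 + n/p)/2`. -/
def betaPar (n : ℕ) (m : ℝ) : ℝ := (1 + n / pPar n m) / 2

/-- The Barenblatt profile `u_B(x) = (B + |x|²)^{-1/(1-m)}`. -/
def uB (n : ℕ) (m B : ℝ) (x : EuclideanSpace ℝ (Fin n)) : ℝ :=
  (B + ‖x‖ ^ 2) ^ (-(1 / (1 - m)))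

/-- The Barenblatt solution `ρ_B(τ,y) = (1+2pτ)^{-nβ} u_B((1+2pτ)^{-β} y)`. -/
def rhoB (n : ℕ) (m B : ℝ) (τ : ℝ) (y : EuclideanSpace ℝ (Fin n)) : ℝ :=
  (1 + 2 * pPar n m * τ) ^ (-(n : ℝ) * betaPar n m) *
    uB n m B ((1 + 2 * pPar n m * τ) ^ (-betaPar n m) • y)

/-- A (positive, continuous up to time 0, smooth for positive times) solution of the
fast diffusion equation `∂_τ ρ = (1/m) Δ (ρ^m)` on `[0,∞) × ℝⁿ`. -/
def IsFDESol (n : ℕ) (m : ℝ) (ρ : ℝ → EuclideanSpace ℝ (Fin n) → ℝ) : Prop :=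
  (∀ τ ∈ Set.Ici (0 : ℝ), ∀ y, 0 < ρ τ y) ∧
  ContinuousOn (fun q : ℝ × EuclideanSpace ℝ (Fin n) => ρ q.1 q.2)
    (Set.Ici 0 ×ˢ Set.univ) ∧
  ContDiffOn ℝ (⊤ : ℕ∞) (fun q : ℝ × EuclideanSpace ℝ (Fin n) => ρ q.1 q.2)
    (Set.Ioi 0 ×ˢ Set.univ) ∧
  ∀ τ ∈ Set.Ioi (0 : ℝ), ∀ y,
    deriv (fun s => ρ s y) τ = (1 / m) * lap n (fun x => ρ τ x ^ m) y

/-- Evaluation of a multivariate polynomial as a function on `ℝⁿ`. -/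
def evalPoly (n : ℕ) (P : MvPolynomial (Fin n) ℝ) (x : EuclideanSpace ℝ (Fin n)) : ℝ :=
  MvPolynomial.eval (fun i => x i) P

/-!
Truncate the harmonic polynomial `h`, of degree `ℓ`, by the dilated cutoffs
`χₖ(y) = χ(y / (k + 1))`. By Green's formula the moment `∫ ρ h χₖ` has time derivative
`∫ (ρ ^ m / m) Δ(h χₖ)`. Since `h` is harmonic, `Δ(h χₖ) = 2 ∇h · ∇χₖ + h Δχₖ` vanishes near any
given point once `k` is large, and it is `O((1 + |y|) ^ (ℓ - 2))` uniformly in `k`. The choice of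
`p` makes `m (n + p) = n + p - 2`, so that `ρ ^ m = O((1 + |y|) ^ (-(n + p - 2)))` and the
integrand is `O((1 + |y|) ^ (ℓ - p - n))`, which is integrable as `ℓ < p`. By dominated
convergence these derivatives tend to `0`, locally uniformly in time, while the truncated moments
tend to the full moment, whose derivative is therefore `0`.
-/

open Asymptotics InnerProductSpace Laplacian Gradient

theorem fderiv_fderiv_mul_apply {E : Type*} [NormedAddCommGroup E] [NormedSpace ℝ E]
    {f g : E → ℝ} (hf : ContDiff ℝ 2 f) (hg : ContDiff ℝ 2 g) (x v : E) :
    fderiv ℝ (fun y => fderiv ℝ (fun z => f z * g z) y v) x v =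
      fderiv ℝ (fun y => fderiv ℝ f y v) x v * g x + 2 * (fderiv ℝ f x v * fderiv ℝ g x v) +
        f x * fderiv ℝ (fun y => fderiv ℝ g y v) x v := by
  have df := hf.differentiable two_ne_zero
  have dg := hg.differentiable two_ne_zero
  have df' : Differentiable ℝ fun y => fderiv ℝ f y v :=
    ((hf.fderiv_right (m := 1) (by norm_num)).clm_apply contDiff_const).differentiable one_ne_zero
  have dg' : Differentiable ℝ fun y => fderiv ℝ g y v :=
    ((hg.fderiv_right (m := 1) (by norm_num)).clm_apply contDiff_const).differentiable one_ne_zero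
  have hfg : (fun y => fderiv ℝ (fun z => f z * g z) y v) =
      fun y => f y * fderiv ℝ g y v + g y * fderiv ℝ f y v :=
    funext fun y => by simp [fderiv_fun_mul (df y) (dg y)]
  rw [hfg, fderiv_fun_add ((df x).fun_mul (dg' x)) ((dg x).fun_mul (df' x)),
    fderiv_fun_mul (df x) (dg' x), fderiv_fun_mul (dg x) (df' x)]
  simp only [add_apply, smul_apply, smul_eq_mul]
  ring

section Laplacian

variable {E : Type*} [NormedAddCommGroup E] [InnerProductSpace ℝ E] [FiniteDimensional ℝ E]
  {f g : E → ℝ}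

theorem laplacian_eq_sum_fderiv_fderiv {ι : Type*} [Fintype ι] (b : OrthonormalBasis ι ℝ E)
    (hf : ContDiff ℝ 2 f) (x : E) :
    Δ f x = ∑ i, fderiv ℝ (fun y => fderiv ℝ f y (b i)) x (b i) := by
  have hf' : DifferentiableAt ℝ (fderiv ℝ f) x :=
    (hf.fderiv_right (m := 1) (by norm_num)).differentiable one_ne_zero x
  simp only [laplacian_eq_iteratedFDeriv_orthonormalBasis f b, iteratedFDeriv_two_apply]
  refine Finset.sum_congr rfl fun i _ => ?_
  simp [fderiv_clm_apply hf' (differentiableAt_const _)]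

theorem continuous_laplacian (hf : ContDiff ℝ 2 f) : Continuous (Δ f) := by
  rw [laplacian_eq_iteratedFDeriv_stdOrthonormalBasis]
  have := hf.continuous_iteratedFDeriv le_rfl
  fun_prop

theorem hasCompactSupport_laplacian (hf : HasCompactSupport f) : HasCompactSupport (Δ f) := by
  refine hf.mono' fun x hx => ?_
  contrapose! hx
  have := (laplacian_congr_nhds (notMem_tsupport_iff_eventuallyEq.1 hx)).eq_of_nhds
  simpa [Pi.zero_def] using this

theorem laplacian_comp_smul (c : ℝ) (hf : ContDiff ℝ 2 f) (x : E) :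
    Δ (fun y => f (c • y)) x = c ^ 2 * Δ f (c • x) := by
  simp only [laplacian_eq_iteratedFDeriv_stdOrthonormalBasis,
    iteratedFDeriv_comp_const_smul c hf, smul_apply, smul_eq_mul,
    Finset.mul_sum]

theorem laplacian_mul (hf : ContDiff ℝ 2 f) (hg : ContDiff ℝ 2 g) (x : E) :
    Δ (fun y => f y * g y) x = Δ f x * g x + 2 * ⟪∇ f x, ∇ g x⟫_ℝ + f x * Δ g x := by
  let b := stdOrthonormalBasis ℝ E
  have hinner : ⟪∇ f x, ∇ g x⟫_ℝ = ∑ i, fderiv ℝ f x (b i) * fderiv ℝ g x (b i) := by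
    rw [← b.sum_inner_mul_inner]
    simp [inner_gradient_left, inner_gradient_right]
  simp only [laplacian_eq_sum_fderiv_fderiv b, hf, hg, hf.mul hg, hinner,
    fderiv_fderiv_mul_apply hf hg, Finset.sum_add_distrib, Finset.sum_mul, Finset.mul_sum]

variable [MeasurableSpace E] [BorelSpace E] {μ : Measure E} [μ.IsAddHaarMeasure]

theorem integral_mul_fderiv_eq_neg_of_hasCompactSupport (hf : ContDiff ℝ 1 f)
    (hg : ContDiff ℝ 1 g) (hfg : HasCompactSupport f ∨ HasCompactSupport g) (v : E) :
    ∫ x, f x * fderiv ℝ g x v ∂μ = -∫ x, fderiv ℝ f x v * g x ∂μ := by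
  have cf : Continuous fun x => fderiv ℝ f x v := by fun_prop
  have cg : Continuous fun x => fderiv ℝ g x v := by fun_prop
  refine integral_mul_fderiv_eq_neg_fderiv_mul_of_integrable ?_ ?_ ?_
    (fun x _ => hf.differentiable one_ne_zero x) (fun x _ => hg.differentiable one_ne_zero x)
  · exact (cf.mul hg.continuous).integrable_of_hasCompactSupport
      (hfg.elim (fun h => (h.fderiv_apply ℝ v).mul_right) fun h => h.mul_left)
  · exact (hf.continuous.mul cg).integrable_of_hasCompactSupport
      (hfg.elim (fun h => h.mul_right) fun h => (h.fderiv_apply ℝ v).mul_left)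
  · exact (hf.continuous.mul hg.continuous).integrable_of_hasCompactSupport
      (hfg.elim (fun h => h.mul_right) fun h => h.mul_left)

theorem integral_laplacian_mul_eq_integral_mul_laplacian (hf : ContDiff ℝ 2 f)
    (hg : ContDiff ℝ 2 g) (hgc : HasCompactSupport g) :
    ∫ x, Δ f x * g x ∂μ = ∫ x, f x * Δ g x ∂μ := by
  let b := stdOrthonormalBasis ℝ E
  have hf' : ∀ i, ContDiff ℝ 1 fun x => fderiv ℝ f x (b i) := fun i =>
    (hf.fderiv_right (by norm_num)).clm_apply contDiff_const
  have hg' : ∀ i, ContDiff ℝ 1 fun x => fderiv ℝ g x (b i) := fun i =>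
    (hg.fderiv_right (by norm_num)).clm_apply contDiff_const
  have hgc' : ∀ i, HasCompactSupport fun x => fderiv ℝ g x (b i) := fun i =>
    hgc.fderiv_apply ℝ (b i)
  simp only [laplacian_eq_sum_fderiv_fderiv b, hf, hg, Finset.sum_mul, Finset.mul_sum]
  rw [integral_finsetSum, integral_finsetSum]
  · refine Finset.sum_congr rfl fun i _ => ?_
    rw [integral_mul_fderiv_eq_neg_of_hasCompactSupport (hf.of_le one_le_two) (hg' i)
        (.inr (hgc' i)),
      integral_mul_fderiv_eq_neg_of_hasCompactSupport (hf' i) (hg.of_le one_le_two) (.inr hgc),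
      neg_neg]
  · exact fun i _ => (hf.continuous.mul (((hg' i).continuous_fderiv one_ne_zero).clm_apply
      continuous_const)).integrable_of_hasCompactSupport ((hgc' i).fderiv_apply ℝ (b i)).mul_left
  · exact fun i _ => ((((hf' i).continuous_fderiv one_ne_zero).clm_apply
      continuous_const).mul hg.continuous).integrable_of_hasCompactSupport hgc.mul_left

end Laplacian

section Growth

theorem isBigO_smul_rpow {α F : Type*} [NormedAddCommGroup F] [NormedSpace ℝ F] {l : Filter α}
    {f w : α → ℝ} {g : α → F} {a b : ℝ} (hw : ∀ x, 0 < w x) (hf : f =O[l] fun x => w x ^ a)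
    (hg : g =O[l] fun x => w x ^ b) : (fun x => f x • g x) =O[l] fun x => w x ^ (a + b) :=
  (hf.smul hg).congr_right fun x => (Real.rpow_add (hw x) a b).symm

theorem isBigO_rpow_rpow_of_le {α : Type*} {l : Filter α} {w : α → ℝ} {a b : ℝ}
    (hw : ∀ x, 1 ≤ w x) (hab : a ≤ b) : (fun x => w x ^ a) =O[l] fun x => w x ^ b :=
  .of_norm_le fun x => by
    rw [Real.norm_of_nonneg (Real.rpow_nonneg (zero_le_one.trans (hw x)) a)]
    exact Real.rpow_le_rpow_of_exponent_le (hw x) hab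

theorem isBigO_rpow_mul {α : Type*} {l : Filter α} {w f : α → ℝ} {a m : ℝ} (hw : ∀ x, 0 < w x)
    (hm : 0 ≤ m) (hf : f =O[l] fun x => w x ^ a) :
    (fun x => f x ^ m) =O[l] fun x => w x ^ (a * m) :=
  (hf.rpow hm (.of_forall fun x => Real.rpow_nonneg (hw x).le a)).congr_right fun x =>
    (Real.rpow_mul (hw x).le a m).symm

theorem isBigO_prod_top_of_mem {ι E : Type*} {l : Filter ι} {J : Set ι} (hJ : J ∈ l)
    {f : ι → E → ℝ} {w : E → ℝ} {C : ℝ} (hf : ∀ i ∈ J, ∀ y, 0 ≤ f i y)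
    (hfw : ∀ i ∈ J, ∀ y, f i y ≤ C * w y) (hw : ∀ y, 0 ≤ w y) :
    (fun z : ι × E => f z.1 z.2) =O[l ×ˢ ⊤] fun z => w z.2 := by
  refine .of_bound C (mem_prod_top.2 ?_)
  filter_upwards [hJ] with i hi y
  rw [Real.norm_of_nonneg (hf i hi y), Real.norm_of_nonneg (hw y)]
  exact hfw i hi y

variable {E : Type*} [NormedAddCommGroup E]

theorem one_le_one_add_norm (y : E) : 1 ≤ 1 + ‖y‖ :=
  le_add_of_nonneg_right (norm_nonneg y)

theorem one_add_norm_pos (y : E) : 0 < 1 + ‖y‖ :=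
  one_pos.trans_le (one_le_one_add_norm y)

theorem tendsto_integral_of_isBigO_one_add_norm [NormedSpace ℝ E] [FiniteDimensional ℝ E]
    [MeasurableSpace E] [BorelSpace E] {μ : Measure E} [μ.IsAddHaarMeasure]
    {ι : Type*} {l : Filter ι} [l.IsCountablyGenerated] {F : ι → E → ℝ} {f : E → ℝ} {r : ℝ}
    (hr : Module.finrank ℝ E < r) (hF : ∀ᶠ i in l, AEStronglyMeasurable (F i) μ)
    (hO : (fun z : ι × E => F z.1 z.2) =O[l ×ˢ ⊤] fun z => (1 + ‖z.2‖) ^ (-r))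
    (hlim : ∀ y, Tendsto (fun i => F i y) l (𝓝 (f y))) :
    Tendsto (fun i => ∫ y, F i y ∂μ) l (𝓝 (∫ y, f y ∂μ)) := by
  obtain ⟨C, hC⟩ := hO.bound
  refine tendsto_integral_filter_of_dominated_convergence (fun y => C * ‖(1 + ‖y‖) ^ (-r)‖) hF ?_
    ((integrable_one_add_norm hr).norm.const_mul C) (.of_forall hlim)
  filter_upwards [mem_prod_top.1 hC] with i hi using .of_forall hi

variable [NormedSpace ℝ E] {f g : E → ℝ} {a b : ℝ}

/-- `f` is differentiable with `f y = O((1 + |y|) ^ a)` and `∇f y = O((1 + |y|) ^ (a - 1))` on the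
whole space, i.e. `f` obeys the estimates of a symbol of order `a` up to first derivatives. It is
the form in which the degree of a polynomial enters the estimates. -/
structure HasPolyGrowth (a : ℝ) (f : E → ℝ) : Prop where
  differentiable : Differentiable ℝ f
  isBigO : f =O[⊤] fun y => (1 + ‖y‖) ^ a
  isBigO_fderiv : fderiv ℝ f =O[⊤] fun y => (1 + ‖y‖) ^ (a - 1)

namespace HasPolyGrowth

theorem mono (hf : HasPolyGrowth a f) (hab : a ≤ b) : HasPolyGrowth b f where
  differentiable := hf.differentiable
  isBigO := hf.isBigO.trans (isBigO_rpow_rpow_of_le one_le_one_add_norm hab)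
  isBigO_fderiv := hf.isBigO_fderiv.trans
    (isBigO_rpow_rpow_of_le one_le_one_add_norm (sub_le_sub_right hab 1))

theorem const (c : ℝ) : HasPolyGrowth 0 fun _ : E => c where
  differentiable := differentiable_const c
  isBigO := by simpa using isBigO_const_const c (one_ne_zero' ℝ) ⊤
  isBigO_fderiv := by
    rw [fderiv_fun_const]
    exact isBigO_zero _ _

theorem continuousLinearMap (L : E →L[ℝ] ℝ) : HasPolyGrowth 1 L where
  differentiable := L.differentiable
  isBigO := .of_bound ‖L‖ <| .of_forall fun y => by
    rw [Real.rpow_one, Real.norm_of_nonneg (one_add_norm_pos y).le]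
    exact L.le_opNorm_of_le (le_add_of_nonneg_left zero_le_one)
  isBigO_fderiv := by
    simpa [funext fun y => L.fderiv (x := y)] using isBigO_const_const L (one_ne_zero' ℝ) ⊤

theorem mul (hf : HasPolyGrowth a f) (hg : HasPolyGrowth b g) :
    HasPolyGrowth (a + b) fun y => f y * g y where
  differentiable := hf.differentiable.fun_mul hg.differentiable
  isBigO := isBigO_smul_rpow one_add_norm_pos hf.isBigO hg.isBigO
  isBigO_fderiv := by
    have hfg := isBigO_smul_rpow one_add_norm_pos hf.isBigO hg.isBigO_fderiv
    have hgf := isBigO_smul_rpow one_add_norm_pos hg.isBigO hf.isBigO_fderiv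
    rw [show b + (a - 1) = a + (b - 1) by ring] at hgf
    rw [add_sub_assoc]
    exact (hfg.add hgf).congr_left fun y =>
      (fderiv_fun_mul (hf.differentiable y) (hg.differentiable y)).symm

theorem pow (hf : HasPolyGrowth a f) (k : ℕ) : HasPolyGrowth (k * a) fun y => f y ^ k := by
  induction k with
  | zero => simpa using const 1
  | succ k ih => simpa only [pow_succ, Nat.cast_succ, add_one_mul] using ih.mul hf

theorem sum {ι : Type*} {s : Finset ι} {f : ι → E → ℝ}
    (hf : ∀ i ∈ s, HasPolyGrowth a (f i)) : HasPolyGrowth a fun y => ∑ i ∈ s, f i y where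
  differentiable := .fun_sum fun i hi => (hf i hi).differentiable
  isBigO := .fun_sum fun i hi => (hf i hi).isBigO
  isBigO_fderiv := (IsBigO.fun_sum fun i hi => (hf i hi).isBigO_fderiv).congr_left fun y =>
    (fderiv_fun_sum fun i hi => (hf i hi).differentiable y).symm

theorem prod {ι : Type*} {s : Finset ι} {f : ι → E → ℝ} {a : ι → ℝ}
    (hf : ∀ i ∈ s, HasPolyGrowth (a i) (f i)) :
    HasPolyGrowth (∑ i ∈ s, a i) fun y => ∏ i ∈ s, f i y := by
  induction s using Finset.cons_induction with
  | empty => simpa using const 1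
  | cons i s hi ih =>
    simp only [Finset.prod_cons, Finset.sum_cons]
    rw [Finset.forall_mem_cons] at hf
    exact hf.1.mul (ih hf.2)

end HasPolyGrowth

end Growth

section Polynomial

variable {n : ℕ} (P : MvPolynomial (Fin n) ℝ)

theorem evalPoly_eq_sum :
    evalPoly n P = fun y => ∑ d ∈ P.support, P.coeff d * ∏ i, y i ^ d i :=
  funext fun y => MvPolynomial.eval_eq' (fun i => y i) P

theorem contDiff_evalPoly {k : WithTop ℕ∞} : ContDiff ℝ k (evalPoly n P) := by
  rw [evalPoly_eq_sum]
  refine ContDiff.sum fun d _ => contDiff_const.mul (contDiff_prod fun i _ => ?_)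
  fun_prop

theorem hasPolyGrowth_evalPoly : HasPolyGrowth P.totalDegree (evalPoly n P) := by
  rw [evalPoly_eq_sum]
  refine .sum fun d hd => ?_
  have hmonomial : HasPolyGrowth (∑ i, (d i : ℝ)) fun y : EuclideanSpace ℝ (Fin n) =>
      P.coeff d * ∏ i, y i ^ d i := by
    simpa using (HasPolyGrowth.const (P.coeff d)).mul
      (.prod fun i _ => (HasPolyGrowth.continuousLinearMap (EuclideanSpace.proj i)).pow (d i))
  refine hmonomial.mono ?_
  have hle := MvPolynomial.le_totalDegree hd
  rw [Finsupp.sum_fintype _ _ fun _ => rfl] at hle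
  exact_mod_cast hle

end Polynomial

section Cutoff

theorem isBigO_pow_smul_comp_smul {ι E F : Type*} [NormedAddCommGroup E] [NormedSpace ℝ E]
    [NormedAddCommGroup F] [NormedSpace ℝ F] {ψ : E → F} (hψ : Continuous ψ)
    (hψc : HasCompactSupport ψ) {c : ι → ℝ} (hc : ∀ i, c i ∈ unitInterval) (l : ℕ) :
    (fun z : ι × E => c z.1 ^ l • ψ (c z.1 • z.2)) =O[⊤] fun z => (1 + ‖z.2‖) ^ (-(l : ℝ)) := by
  have hweighted : Continuous fun y => (1 + ‖y‖) ^ l • ψ y := by fun_prop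
  obtain ⟨C, hC⟩ := hweighted.bounded_above_of_compact_support hψc.smul_left
  refine .of_bound C (.of_forall fun ⟨i, y⟩ => ?_)
  obtain ⟨hc0, hc1⟩ := hc i
  have hw := one_add_norm_pos y
  have hscale : c i * (1 + ‖y‖) ≤ 1 + ‖c i • y‖ := by
    rw [norm_smul, Real.norm_of_nonneg hc0, mul_one_add]
    gcongr
  rw [Real.rpow_neg hw.le, Real.rpow_natCast, Real.norm_of_nonneg (by positivity),
    ← div_eq_mul_inv, le_div_iff₀ (pow_pos hw l)]
  calc ‖c i ^ l • ψ (c i • y)‖ * (1 + ‖y‖) ^ l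
      = (c i * (1 + ‖y‖)) ^ l * ‖ψ (c i • y)‖ := by
        rw [norm_smul, Real.norm_of_nonneg (pow_nonneg hc0 l), mul_pow]
        ring
    _ ≤ (1 + ‖c i • y‖) ^ l * ‖ψ (c i • y)‖ := by
        gcongr
    _ = ‖(1 + ‖c i • y‖) ^ l • ψ (c i • y)‖ := by
        rw [norm_smul (_ ^ l), Real.norm_of_nonneg (by positivity)]
    _ ≤ C := hC _

theorem one_div_succ_mem_unitInterval (k : ℕ) : 1 / ((k : ℝ) + 1) ∈ unitInterval :=
  unitInterval.div_mem zero_le_one (by positivity) (by simp)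

variable {E : Type*} [NormedAddCommGroup E] [InnerProductSpace ℝ E]

/-- A smooth bump equal to `1` on the unit ball and supported in the ball of radius `2`. -/
def unitBump : ContDiffBump (0 : E) :=
  ⟨1, 2, one_pos, one_lt_two⟩

/-- The exhausting sequence of cutoffs `χₖ(y) = χ(y / (k + 1))`, where `χ` is the unit bump; the
radius `k + 1` rather than `k` keeps the dilation factor in `(0, 1]`. -/
def cutoff (k : ℕ) (y : E) : ℝ :=
  (unitBump : ContDiffBump (0 : E)) ((1 / ((k : ℝ) + 1)) • y)

theorem contDiff_cutoff {r : ℕ∞} (k : ℕ) : ContDiff ℝ r (cutoff (E := E) k) :=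
  unitBump.contDiff.comp (contDiff_const_smul _)

theorem abs_cutoff_le_one (k : ℕ) (y : E) : |cutoff k y| ≤ 1 := by
  rw [cutoff, abs_of_nonneg unitBump.nonneg]
  exact unitBump.le_one

theorem eventually_cutoff_eventuallyEq_one (y : E) :
    ∀ᶠ k : ℕ in atTop, cutoff k =ᶠ[𝓝 y] 1 := by
  have hlim : Tendsto (fun k : ℕ => (1 / ((k : ℝ) + 1)) • y) atTop (𝓝 0) := by
    simpa using (tendsto_one_div_add_atTop_nhds_zero_nat (𝕜 := ℝ)).smul_const y
  have hone := eventually_eventually_nhds.2 (unitBump (E := E)).eventuallyEq_one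
  filter_upwards [hlim.eventually hone] with k hk
  exact (continuous_const_smul (1 / ((k : ℝ) + 1))).continuousAt.eventually hk

variable [FiniteDimensional ℝ E]

theorem hasCompactSupport_cutoff (k : ℕ) : HasCompactSupport (cutoff (E := E) k) :=
  unitBump.hasCompactSupport.comp_smul Nat.one_div_pos_of_nat.ne'

theorem isBigO_fderiv_cutoff :
    (fun z : ℕ × E => fderiv ℝ (cutoff z.1) z.2) =O[⊤] fun z => (1 + ‖z.2‖) ^ (-1 : ℝ) := by
  have hχ : ContDiff ℝ 1 (unitBump (E := E)) := unitBump.contDiff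
  have hdilate := isBigO_pow_smul_comp_smul (hχ.continuous_fderiv one_ne_zero)
    (unitBump.hasCompactSupport.fderiv ℝ) one_div_succ_mem_unitInterval 1
  simp only [pow_one, Nat.cast_one] at hdilate
  refine hdilate.congr_left fun z => ?_
  rw [← fderiv_comp_smul]
  rfl

theorem isBigO_laplacian_cutoff :
    (fun z : ℕ × E => Δ (cutoff z.1 : E → ℝ) z.2) =O[⊤] fun z => (1 + ‖z.2‖) ^ (-2 : ℝ) := by
  have hχ : ContDiff ℝ 2 (unitBump (E := E)) := unitBump.contDiff
  have hdilate := isBigO_pow_smul_comp_smul (continuous_laplacian hχ)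
    (hasCompactSupport_laplacian unitBump.hasCompactSupport) one_div_succ_mem_unitInterval 2
  rw [Nat.cast_ofNat] at hdilate
  exact hdilate.congr_left fun z => (laplacian_comp_smul _ hχ z.2).symm

variable {h : E → ℝ} {a : ℝ}

theorem isBigO_laplacian_mul_cutoff (hh : ContDiff ℝ 2 h) (hharm : ∀ y, Δ h y = 0)
    (hgrowth : HasPolyGrowth a h) :
    (fun z : ℕ × E => Δ (fun y => h y * cutoff z.1 y) z.2) =O[⊤]
      fun z => (1 + ‖z.2‖) ^ (a - 2) := by
  have hw : ∀ z : ℕ × E, 0 < 1 + ‖z.2‖ := fun z => one_add_norm_pos z.2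
  have hsnd : Tendsto (Prod.snd : ℕ × E → E) ⊤ ⊤ := tendsto_top
  have hgrad : (fun z : ℕ × E => ⟪∇ h z.2, ∇ (cutoff z.1) z.2⟫_ℝ) =O[⊤]
      fun z => (1 + ‖z.2‖) ^ (a - 2) := by
    have hle : (fun z : ℕ × E => ⟪∇ h z.2, ∇ (cutoff z.1) z.2⟫_ℝ) =O[⊤]
        fun z => ‖fderiv ℝ h z.2‖ * ‖fderiv ℝ (cutoff z.1) z.2‖ :=
      .of_norm_le fun z => by
        simpa [gradient] using norm_inner_le_norm (𝕜 := ℝ) (∇ h z.2) (∇ (cutoff z.1) z.2)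
    have hmul := isBigO_smul_rpow hw (hgrowth.isBigO_fderiv.comp_tendsto hsnd).norm_left
      isBigO_fderiv_cutoff.norm_left
    rw [show a - 1 + -1 = a - 2 by ring] at hmul
    exact hle.trans hmul
  have hlap := isBigO_smul_rpow hw (hgrowth.isBigO.comp_tendsto hsnd)
    (isBigO_laplacian_cutoff (E := E))
  refine ((hgrad.const_mul_left 2).add hlap).congr_left fun z => ?_
  simp [laplacian_mul hh (contDiff_cutoff z.1), hharm]

theorem eventually_laplacian_mul_cutoff_eq_zero (hharm : ∀ y, Δ h y = 0) (y : E) :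
    ∀ᶠ k : ℕ in atTop, Δ (fun y => h y * cutoff k y) y = 0 := by
  filter_upwards [eventually_cutoff_eventuallyEq_one y] with k hk
  have hcongr : (fun y => h y * cutoff k y) =ᶠ[𝓝 y] h := by
    filter_upwards [hk] with z hz
    simp [hz]
  rw [(laplacian_congr_nhds hcongr).eq_of_nhds, hharm]

end Cutoff

section Moments

theorem hasDerivAt_integral_mul_of_hasCompactSupport {X : Type*} [TopologicalSpace X] [T2Space X]
    [MeasurableSpace X] [OpensMeasurableSpace X] {μ : Measure X} [IsFiniteMeasureOnCompacts μ]
    {ρ ρ' : ℝ → X → ℝ} {h χ g : X → ℝ} {τ : ℝ} (hρ : ∀ᶠ s in 𝓝 τ, Continuous (ρ s))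
    (hρ' : Continuous (ρ' τ)) (hderiv : ∀ᶠ s in 𝓝 τ, ∀ y, HasDerivAt (fun t => ρ t y) (ρ' s y) s)
    (hh : Continuous h) (hχ : Continuous χ) (hχc : HasCompactSupport χ)
    (hg : LocallyIntegrable g μ) (hdom : ∀ᶠ s in 𝓝 τ, ∀ y, |ρ' s y * h y| ≤ g y) :
    HasDerivAt (fun s => ∫ y, ρ s y * (h y * χ y) ∂μ) (∫ y, ρ' τ y * (h y * χ y) ∂μ) τ := by
  have hbound : Integrable (fun y => |χ y| * g y) μ :=
    hg.integrable_smul_left_of_hasCompactSupport hχ.abs hχc.norm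
  refine (hasDerivAt_integral_of_dominated_loc_of_deriv_le
    (F' := fun s y => ρ' s y * (h y * χ y)) (hderiv.and hdom) ?_ ?_ ?_ ?_ hbound ?_).2
  · filter_upwards [hρ] with s hs
    exact (hs.mul (hh.mul hχ)).aestronglyMeasurable
  · exact (hρ.self_of_nhds.mul (hh.mul hχ)).integrable_of_hasCompactSupport hχc.mul_left.mul_left
  · exact (hρ'.mul (hh.mul hχ)).aestronglyMeasurable
  · refine .of_forall fun y s hs => ?_
    rw [Real.norm_eq_abs, ← mul_assoc, abs_mul, mul_comm]
    exact mul_le_mul_of_nonneg_left (hs.2 y) (abs_nonneg _)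
  · exact .of_forall fun y s hs => (hs.1 y).mul_const _

variable {E : Type*} [NormedAddCommGroup E] [InnerProductSpace ℝ E] [FiniteDimensional ℝ E]
  [MeasurableSpace E] [BorelSpace E] {μ : Measure E} [μ.IsAddHaarMeasure]
  {h : E → ℝ} {d : ℝ}

theorem tendsto_integral_mul_cutoff {r : E → ℝ} {q : ℝ} (hr : Continuous r)
    (hrO : r =O[⊤] fun y => (1 + ‖y‖) ^ (-q)) (hh : HasPolyGrowth d h)
    (hq : Module.finrank ℝ E + d < q) :
    Tendsto (fun k => ∫ y, r y * (h y * cutoff k y) ∂μ) atTop (𝓝 (∫ y, r y * h y ∂μ)) := by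
  refine tendsto_integral_of_isBigO_one_add_norm (r := q - d) (by linarith)
    (.of_forall fun k => ?_) ?_ fun y => ?_
  · exact (hr.mul (hh.differentiable.continuous.mul
      (contDiff_cutoff (r := 0) k).continuous)).aestronglyMeasurable
  · have hmoment := isBigO_smul_rpow one_add_norm_pos hrO hh.isBigO
    rw [neg_add_eq_sub, ← neg_sub] at hmoment
    refine .trans (.of_bound' (.of_forall fun z => ?_))
      (hmoment.comp_tendsto (tendsto_top (f := Prod.snd) (l := atTop ×ˢ ⊤)))
    simpa [← mul_assoc] using
      mul_le_of_le_one_right (norm_nonneg (r z.2 * h z.2)) (abs_cutoff_le_one z.1 z.2)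
  · refine tendsto_const_nhds.congr' ?_
    filter_upwards [eventually_cutoff_eventuallyEq_one y] with k hk
    simp [hk.eq_of_nhds]

theorem tendsto_integral_mul_laplacian_mul_cutoff {ι : Type*} {l : Filter ι}
    [l.IsCountablyGenerated] {u : ι → E → ℝ} {a : ℝ} (hu : ∀ᶠ i in l, Continuous (u i))
    (huO : (fun z : ι × E => u z.1 z.2) =O[l ×ˢ ⊤] fun z => (1 + ‖z.2‖) ^ (-a))
    (hh : ContDiff ℝ 2 h) (hharm : ∀ y, Δ h y = 0) (hgrowth : HasPolyGrowth d h)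
    (ha : Module.finrank ℝ E + d < a + 2) :
    Tendsto (fun p : ℕ × ι => ∫ y, u p.2 y * Δ (fun x => h x * cutoff p.1 x) y ∂μ) (atTop ×ˢ l)
      (𝓝 0) := by
  rw [← integral_zero E ℝ (μ := μ)]
  refine tendsto_integral_of_isBigO_one_add_norm (r := a + 2 - d) (by linarith) ?_ ?_ fun y => ?_
  · filter_upwards [tendsto_snd.eventually hu] with p hp
    exact (hp.mul (continuous_laplacian (hh.mul (contDiff_cutoff p.1)))).aestronglyMeasurable
  · have hu' := huO.comp_tendsto
      ((tendsto_snd (f := atTop (α := ℕ)) (g := l)).prodMap (tendsto_id (x := (⊤ : Filter E))))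
    have hlap := (isBigO_laplacian_mul_cutoff hh hharm hgrowth).comp_tendsto
      (tendsto_top (f := fun z : (ℕ × ι) × E => (z.1.1, z.2)) (l := (atTop ×ˢ l) ×ˢ ⊤))
    have hmul := isBigO_smul_rpow (fun z : (ℕ × ι) × E => one_add_norm_pos z.2) hu' hlap
    rwa [show -a + (d - 2) = -(a + 2 - d) by ring] at hmul
  · refine tendsto_const_nhds.congr' ?_
    filter_upwards [tendsto_fst.eventually (eventually_laplacian_mul_cutoff_eq_zero hharm y)]
      with p hp
    rw [hp, mul_zero]

theorem hasDerivAt_integral_mul_of_hasDerivAt_laplacian {ρ u : ℝ → E → ℝ} {g : E → ℝ}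
    {τ q a : ℝ} (hρ : ∀ᶠ s in 𝓝 τ, Continuous (ρ s)) (hu : ∀ᶠ s in 𝓝 τ, ContDiff ℝ 2 (u s))
    (hevol : ∀ᶠ s in 𝓝 τ, ∀ y, HasDerivAt (fun t => ρ t y) (Δ (u s) y) s)
    (hρO : (fun z : ℝ × E => ρ z.1 z.2) =O[𝓝 τ ×ˢ ⊤] fun z => (1 + ‖z.2‖) ^ (-q))
    (huO : (fun z : ℝ × E => u z.1 z.2) =O[𝓝 τ ×ˢ ⊤] fun z => (1 + ‖z.2‖) ^ (-a))
    (hh : ContDiff ℝ 2 h) (hharm : ∀ y, Δ h y = 0) (hgrowth : HasPolyGrowth d h)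
    (hq : Module.finrank ℝ E + d < q) (ha : Module.finrank ℝ E + d < a + 2)
    (hg : LocallyIntegrable g μ) (hdom : ∀ᶠ s in 𝓝 τ, ∀ y, |Δ (u s) y * h y| ≤ g y) :
    HasDerivAt (fun s => ∫ y, ρ s y * h y ∂μ) 0 τ := by
  have hrate : TendstoUniformlyOnFilter
      (fun k s => ∫ y, u s y * Δ (fun x => h x * cutoff k x) y ∂μ) (fun _ => 0) atTop (𝓝 τ) := by
    rw [← tendsto_prod_filter_iff]
    exact tendsto_integral_mul_laplacian_mul_cutoff (hu.mono fun s hs => hs.continuous) huO hh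
      hharm hgrowth ha
  have hderiv : ∀ᶠ s in 𝓝 τ, ∀ k,
      HasDerivAt (fun t => ∫ y, ρ t y * (h y * cutoff k y) ∂μ)
        (∫ y, u s y * Δ (fun x => h x * cutoff k x) y ∂μ) s := by
    filter_upwards [hρ.eventually_nhds, hevol.eventually_nhds, hdom.eventually_nhds, hu]
      with s hρs hevols hdoms hus k
    rw [← integral_laplacian_mul_eq_integral_mul_laplacian hus (hh.mul (contDiff_cutoff k))
      (hasCompactSupport_cutoff k).mul_left]
    exact hasDerivAt_integral_mul_of_hasCompactSupport (ρ' := fun s => Δ (u s)) hρs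
      (continuous_laplacian hus) hevols hh.continuous (contDiff_cutoff (r := 0) k).continuous
      (hasCompactSupport_cutoff k) hg hdoms
  refine hasDerivAt_of_tendstoUniformlyOnFilter
    (f := fun k s => ∫ y, ρ s y * (h y * cutoff k y) ∂μ) hrate
    ((tendsto_snd.eventually hderiv).mono fun p hp => hp p.1) ?_
  obtain ⟨C, hC⟩ := hρO.bound
  filter_upwards [hρ, mem_prod_top.1 hC] with s hs hCs
  exact tendsto_integral_mul_cutoff hs (.of_bound C (.of_forall hCs)) hgrowth hq

end Moments

section FastDiffusion

variable {n : ℕ}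

theorem lap_eq_laplacian {f : EuclideanSpace ℝ (Fin n) → ℝ} (hf : ContDiff ℝ 2 f)
    (x : EuclideanSpace ℝ (Fin n)) : lap n f x = Δ f x := by
  simp [laplacian_eq_sum_fderiv_fderiv (EuclideanSpace.basisFun (Fin n) ℝ) hf, lap, stdBasis]

theorem isOpen_setOf_pos_and_ofReal_lt (T : ℝ≥0∞) :
    IsOpen {τ : ℝ | 0 < τ ∧ ENNReal.ofReal τ < T} :=
  isOpen_Ioi.inter (isOpen_Iio.preimage ENNReal.continuous_ofReal)

theorem isPreconnected_setOf_pos_and_ofReal_lt (T : ℝ≥0∞) :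
    IsPreconnected {τ : ℝ | 0 < τ ∧ ENNReal.ofReal τ < T} :=
  (Set.ordConnected_Ioi.inter
    (Set.ordConnected_Iio.preimage_mono fun _ _ => ENNReal.ofReal_le_ofReal)).isPreconnected

theorem add_pPar_mul_add_two {m : ℝ} (hm : m ≠ 1) :
    (n + pPar n m) * m + 2 = n + pPar n m := by
  have : 1 - m ≠ 0 := sub_ne_zero.2 hm.symm
  rw [pPar]
  field_simp
  ring

theorem statement19_general (n : ℕ) {m q : ℝ} (hm : 0 < m) {S : Set ℝ} (hSo : IsOpen S)
    (hSc : IsPreconnected S) {ρ : ℝ → EuclideanSpace ℝ (Fin n) → ℝ}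
    (hpos : ∀ τ ∈ S, ∀ y, 0 < ρ τ y)
    (hreg_t : ∀ y, DifferentiableOn ℝ (fun τ => ρ τ y) S)
    (hreg_x : ∀ τ ∈ S, ContDiff ℝ 2 (ρ τ))
    (hPDE : ∀ τ ∈ S, ∀ y,
      deriv (fun s => ρ s y) τ = (1 / m) * lap n (fun x => ρ τ x ^ m) y)
    (hdecay : ∀ J : Set ℝ, IsCompact J → J ⊆ S →
      ∃ C : ℝ, ∀ τ ∈ J, ∀ y, ρ τ y ≤ C * (1 + ‖y‖) ^ (-q))
    (h : MvPolynomial (Fin n) ℝ)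
    (hharm : ∀ x, lap n (evalPoly n h) x = 0)
    (hdeg : (n : ℝ) + h.totalDegree < q) (hdeg' : (n : ℝ) + h.totalDegree < q * m + 2)
    (hdom : ∀ J : Set ℝ, IsCompact J → J ⊆ S →
      ∃ g : EuclideanSpace ℝ (Fin n) → ℝ, LocallyIntegrable g ∧
        ∀ τ ∈ J, ∀ y, |deriv (fun s => ρ s y) τ * evalPoly n h y| ≤ g y)
    {τ₁ τ₂ : ℝ} (h1 : τ₁ ∈ S) (h2 : τ₂ ∈ S) :
    ∫ y, ρ τ₁ y * evalPoly n h y = ∫ y, ρ τ₂ y * evalPoly n h y := by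
  have hpow : ∀ τ ∈ S, ContDiff ℝ 2 fun x => ρ τ x ^ m := fun τ hτ =>
    (hreg_x τ hτ).rpow_const_of_ne fun y => (hpos τ hτ y).ne'
  have hevol : ∀ τ ∈ S, ∀ y, deriv (fun s => ρ s y) τ = Δ (fun x => 1 / m * ρ τ x ^ m) y := by
    intro τ hτ y
    rw [hPDE τ hτ, lap_eq_laplacian (hpow τ hτ)]
    exact (laplacian_smul (1 / m) (hpow τ hτ).contDiffAt).symm
  have hzero : ∀ τ ∈ S, HasDerivAt (fun s => ∫ y, ρ s y * evalPoly n h y) 0 τ := by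
    intro τ hτ
    obtain ⟨J, hJ, hJS, hJc⟩ := local_compact_nhds (hSo.mem_nhds hτ)
    obtain ⟨C, hC⟩ := hdecay J hJc hJS
    obtain ⟨g, hg, hgJ⟩ := hdom J hJc hJS
    have hρO : (fun z : ℝ × EuclideanSpace ℝ (Fin n) => ρ z.1 z.2) =O[𝓝 τ ×ˢ ⊤]
        fun z => (1 + ‖z.2‖) ^ (-q) :=
      isBigO_prod_top_of_mem hJ (fun s hs y => (hpos s (hJS hs) y).le) hC
        fun y => Real.rpow_nonneg (one_add_norm_pos y).le _
    have huO := (isBigO_rpow_mul (fun z : ℝ × EuclideanSpace ℝ (Fin n) => one_add_norm_pos z.2)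
      hm.le hρO).const_mul_left (1 / m)
    rw [neg_mul] at huO
    refine hasDerivAt_integral_mul_of_hasDerivAt_laplacian (u := fun s x => 1 / m * ρ s x ^ m)
      (mem_of_superset hJ fun s hs => (hreg_x s (hJS hs)).continuous)
      (mem_of_superset hJ fun s hs => contDiff_const.mul (hpow s (hJS hs)))
      (mem_of_superset hJ fun s hs y => ?_) hρO huO
      (contDiff_evalPoly h) (fun y => lap_eq_laplacian (contDiff_evalPoly h) y ▸ hharm y)
      (hasPolyGrowth_evalPoly h) (by simpa using hdeg) (by simpa using hdeg') hg
      (mem_of_superset hJ fun s hs y => ?_)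
    · rw [← hevol s (hJS hs)]
      exact ((hreg_t y).differentiableAt (hSo.mem_nhds (hJS hs))).hasDerivAt
    · rw [← hevol s (hJS hs)]
      exact hgJ s hs y
  exact hSo.is_const_of_deriv_eq_zero hSc
    (fun τ hτ => (hzero τ hτ).differentiableAt.differentiableWithinAt)
    (fun τ hτ => (hzero τ hτ).deriv) h1 h2

end FastDiffusion

/-- **Conservation of harmonic-polynomial moments** for solutions of the fast
diffusion equation on `(0,T)` (0 < T ≤ ∞) with suitable decay: the moment
`τ ↦ ∫ ρ(τ,y) h(y) dy` is constant whenever `h` is harmonic of degree `< p`. -/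
theorem statement19
    (n : ℕ) (hn : 1 ≤ n) (m : ℝ) (hm0 : 0 < m) (hm1 : m < 1)
    (hm : ((n : ℝ) - 2) / n < m)
    (T : ℝ≥0∞) (hT : 0 < T)
    (S : Set ℝ) (hS : S = {τ : ℝ | 0 < τ ∧ ENNReal.ofReal τ < T})
    (ρ : ℝ → EuclideanSpace ℝ (Fin n) → ℝ)
    (hpos : ∀ τ ∈ S, ∀ y, 0 < ρ τ y)
    (hreg_t : ∀ y, ContDiffOn ℝ 1 (fun τ => ρ τ y) S)
    (hreg_x : ∀ τ ∈ S, ContDiff ℝ 2 (ρ τ))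
    (hPDE : ∀ τ ∈ S, ∀ y,
      deriv (fun s => ρ s y) τ = (1 / m) * lap n (fun x => ρ τ x ^ m) y)
    (hdecay : ∀ J : Set ℝ, IsCompact J → J ⊆ S → ∃ C : ℝ, ∀ τ ∈ J, ∀ y,
      ρ τ y ≤ C * (1 + ‖y‖) ^ (-((n : ℝ) + pPar n m)) ∧
      ‖fderiv ℝ (ρ τ) y‖ ≤ C * (1 + ‖y‖) ^ (-((n : ℝ) + pPar n m + 1)))
    (h : MvPolynomial (Fin n) ℝ)
    (hharm : ∀ x, lap n (evalPoly n h) x = 0)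
    (hdeg : (h.totalDegree : ℝ) < pPar n m)
    (hdom : ∀ J : Set ℝ, IsCompact J → J ⊆ S →
      ∃ g : EuclideanSpace ℝ (Fin n) → ℝ, Integrable g ∧
        ∀ τ ∈ J, ∀ y, |deriv (fun s => ρ s y) τ * evalPoly n h y| ≤ g y)
    (τ₁ τ₂ : ℝ) (h1 : τ₁ ∈ S) (h2 : τ₂ ∈ S) :
    ∫ y, ρ τ₁ y * evalPoly n h y = ∫ y, ρ τ₂ y * evalPoly n h y := by
  subst hS
  have hq := add_pPar_mul_add_two (n := n) hm1.ne
  exact statement19_general n hm0 (isOpen_setOf_pos_and_ofReal_lt T)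
    (isPreconnected_setOf_pos_and_ofReal_lt T) hpos
    (fun y => (hreg_t y).differentiableOn one_ne_zero) hreg_x hPDE
    (fun J hJ hJS => (hdecay J hJ hJS).imp fun C hC τ hτ y => (hC τ hτ y).1) h hharm
    (by linarith) (by linarith)
    (fun J hJ hJS => (hdom J hJ hJS).imp fun g hg => ⟨hg.1.locallyIntegrable, hg.2⟩) h1 h2
end
end
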